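/- (Interior regularity) Let V ∈ L^p(Ω) with 2 ≤ p < ∞ and V ≥ 0 a.e., let f ∈ L²(Ω), and let u ∈ H₀(Ω) be the weak solution of −(y^{2α₁}∂ₓ²u + x^{2α₂}∂_y²u) + V u = f. Then u belongs to H²_loc(Ω) (i.e. u ∈ H²(Ω') for every open Ω' with closure contained in Ω), and moreover for every such Ω' there exists α ∈ (0,1) such that u is Hölder continuous with exponent α on the closure of Ω'. -/

import Mathlib

open MeasureTheory Set Filter

noncomputable section

/-- The open unit square `Ω = (0,1) × (0,1)` in `ℝ²`. -/
def Omega : Set (ℝ × ℝ) := Ioo (0:ℝ) 1 ×ˢ Ioo (0:ℝ) 1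

/-- Test functions on a set `s`: smooth with compact support contained in `s`. -/
def IsTestOn (s : Set (ℝ × ℝ)) (φ : ℝ × ℝ → ℝ) : Prop :=
  ContDiff ℝ (⊤ : ℕ∞) φ ∧ HasCompactSupport φ ∧ tsupport φ ⊆ s

/-- Classical partial derivative in the `x`-direction. -/
def pdx (φ : ℝ × ℝ → ℝ) (p : ℝ × ℝ) : ℝ := fderiv ℝ φ p (1, 0)

/-- Classical partial derivative in the `y`-direction. -/
def pdy (φ : ℝ × ℝ → ℝ) (p : ℝ × ℝ) : ℝ := fderiv ℝ φ p (0, 1)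

/-- `g` is a weak `x`-partial derivative of `u` on `s`. -/
def HasWeakDerivXOn (s : Set (ℝ × ℝ)) (u g : ℝ × ℝ → ℝ) : Prop :=
  LocallyIntegrableOn u s volume ∧ LocallyIntegrableOn g s volume ∧
  ∀ φ : ℝ × ℝ → ℝ, IsTestOn s φ →
    ∫ p in s, u p * pdx φ p = - ∫ p in s, g p * φ p

/-- `g` is a weak `y`-partial derivative of `u` on `s`. -/
def HasWeakDerivYOn (s : Set (ℝ × ℝ)) (u g : ℝ × ℝ → ℝ) : Prop :=
  LocallyIntegrableOn u s volume ∧ LocallyIntegrableOn g s volume ∧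
  ∀ φ : ℝ × ℝ → ℝ, IsTestOn s φ →
    ∫ p in s, u p * pdy φ p = - ∫ p in s, g p * φ p

/-- Test functions on `Ω`. -/
def IsTest (φ : ℝ × ℝ → ℝ) : Prop := IsTestOn Omega φ

/-- Membership in the weighted Sobolev space `𝓗¹(Ω)`, with weak derivatives `gx, gy`:
`u ∈ L²(Ω)`, `gx = ∂ₓu`, `gy = ∂_y u` weakly, and `y^α₁ gx, x^α₂ gy ∈ L²(Ω)`. -/
structure MemH1 (α₁ α₂ : ℝ) (u gx gy : ℝ × ℝ → ℝ) : Prop where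
  memL2 : MemLp u 2 (volume.restrict Omega)
  weakX : HasWeakDerivXOn Omega u gx
  weakY : HasWeakDerivYOn Omega u gy
  wgx : MemLp (fun p => p.2 ^ α₁ * gx p) 2 (volume.restrict Omega)
  wgy : MemLp (fun p => p.1 ^ α₂ * gy p) 2 (volume.restrict Omega)

/-- The `𝓗¹(Ω)` norm of `u` (with weak derivatives `gx, gy`). -/
def H1Norm (α₁ α₂ : ℝ) (u gx gy : ℝ × ℝ → ℝ) : ℝ :=
  Real.sqrt ((∫ p in Omega, (u p) ^ 2) +
    (∫ p in Omega, (p.2 ^ α₁ * gx p) ^ 2) +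
    (∫ p in Omega, (p.1 ^ α₂ * gy p) ^ 2))

/-- Membership in `𝓗₀¹(Ω)`: member of `𝓗¹(Ω)` approximable in the `𝓗¹` norm by
test functions. -/
def MemH10 (α₁ α₂ : ℝ) (u gx gy : ℝ × ℝ → ℝ) : Prop :=
  MemH1 α₁ α₂ u gx gy ∧
  ∀ ε : ℝ, 0 < ε → ∃ φ : ℝ × ℝ → ℝ, IsTest φ ∧
    H1Norm α₁ α₂ (fun p => u p - φ p) (fun p => gx p - pdx φ p)
      (fun p => gy p - pdy φ p) < ε

/-- Membership in `H₀(Ω) = {u ∈ 𝓗₀¹(Ω) : ∫_Ω V u² < ∞}`. -/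
def MemH0 (α₁ α₂ : ℝ) (V u gx gy : ℝ × ℝ → ℝ) : Prop :=
  MemH10 α₁ α₂ u gx gy ∧
  IntegrableOn (fun p => V p * (u p) ^ 2) Omega volume

/-- The bilinear form `a(u,v)` associated with the sub-elliptic operator with potential `V`. -/
def aForm (α₁ α₂ : ℝ) (V u gx gy v hx hy : ℝ × ℝ → ℝ) : ℝ :=
  ∫ p in Omega, ((p.2 ^ α₁ * gx p) * (p.2 ^ α₁ * hx p) +
    (p.1 ^ α₂ * gy p) * (p.1 ^ α₂ * hy p) + V p * u p * v p)

/-- The bilinear form `a₁(u,v)` (no potential). -/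
def a1Form (α₁ α₂ : ℝ) (u gx gy v hx hy : ℝ × ℝ → ℝ) : ℝ :=
  ∫ p in Omega, ((p.2 ^ α₁ * gx p) * (p.2 ^ α₁ * hx p) +
    (p.1 ^ α₂ * gy p) * (p.1 ^ α₂ * hy p))

/-- Membership in `S_p = {V ∈ L^p(Ω) : V ≥ 0 a.e., ‖V‖_{L^p(Ω)} ≤ M}`. -/
def MemSp (ppow M : ℝ) (V : ℝ × ℝ → ℝ) : Prop :=
  MemLp V (ENNReal.ofReal ppow) (volume.restrict Omega) ∧
  (∀ᵐ p ∂(volume.restrict Omega), 0 ≤ V p) ∧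
  eLpNorm V (ENNReal.ofReal ppow) (volume.restrict Omega) ≤ ENNReal.ofReal M

/-- `u` (with weak derivatives `gx, gy`) is an eigenfunction of the sub-elliptic operator
with potential `V` for the eigenvalue `lam`. -/
def IsEigenfun (α₁ α₂ : ℝ) (V : ℝ × ℝ → ℝ) (lam : ℝ) (u gx gy : ℝ × ℝ → ℝ) : Prop :=
  MemH0 α₁ α₂ V u gx gy ∧
  ∀ v hx hy : ℝ × ℝ → ℝ, MemH0 α₁ α₂ V v hx hy →
    aForm α₁ α₂ V u gx gy v hx hy = lam * ∫ p in Omega, u p * v p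

/-- The first eigenvalue `λ₁(V) = inf { a(u,u) : u ∈ H₀(Ω), ‖u‖_{L²} = 1 }`. -/
def lam1 (α₁ α₂ : ℝ) (V : ℝ × ℝ → ℝ) : ℝ :=
  sInf { r | ∃ u gx gy : ℝ × ℝ → ℝ, MemH0 α₁ α₂ V u gx gy ∧
    (∫ p in Omega, (u p) ^ 2) = 1 ∧ r = aForm α₁ α₂ V u gx gy u gx gy }

/-- `sup { a(u,u) : u ∈ span(φ), ‖u‖_{L²(Ω)} = 1 }` for a finite family `φ` with
weak derivatives `φx, φy`. -/
def rayleighSup (α₁ α₂ : ℝ) (V : ℝ × ℝ → ℝ) {k : ℕ} (φ φx φy : Fin k → ℝ × ℝ → ℝ) : ℝ :=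
  sSup { s | ∃ c : Fin k → ℝ,
    (∫ p in Omega, (∑ i, c i * φ i p) ^ 2) = 1 ∧
    s = aForm α₁ α₂ V (fun p => ∑ i, c i * φ i p) (fun p => ∑ i, c i * φx i p)
      (fun p => ∑ i, c i * φy i p) (fun p => ∑ i, c i * φ i p)
      (fun p => ∑ i, c i * φx i p) (fun p => ∑ i, c i * φy i p) }

/-- The set of values `sup { a(u,u) : u ∈ E, ‖u‖ = 1 }` over `k`-dimensional
subspaces `E` of `H₀(Ω)` (represented by `L²(Ω)`-linearly independent families of
`k` elements of `H₀(Ω)`). -/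
def minmaxSet (α₁ α₂ : ℝ) (V : ℝ × ℝ → ℝ) (k : ℕ) : Set ℝ :=
  { r | ∃ φ φx φy : Fin k → ℝ × ℝ → ℝ,
      (∀ i, MemH0 α₁ α₂ V (φ i) (φx i) (φy i)) ∧
      (∀ c : Fin k → ℝ, (∀ᵐ p ∂(volume.restrict Omega), ∑ i, c i * φ i p = 0) → c = 0) ∧
      r = rayleighSup α₁ α₂ V φ φx φy }

/-- The `k`-th eigenvalue via the min-max principle. -/
def lamk (α₁ α₂ : ℝ) (V : ℝ × ℝ → ℝ) (k : ℕ) : ℝ := sInf (minmaxSet α₁ α₂ V k)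

/-- Membership in `U = (𝓗₀¹(Ω) ∩ L^{2q}(Ω)) \ {0}`. -/
def MemU (α₁ α₂ qe : ℝ) (u gx gy : ℝ × ℝ → ℝ) : Prop :=
  MemH10 α₁ α₂ u gx gy ∧
  MemLp u (ENNReal.ofReal (2 * qe)) (volume.restrict Omega) ∧
  ¬ (∀ᵐ p ∂(volume.restrict Omega), u p = 0)

/-- The functional `J(u) = (a₁(u,u) + M ‖u‖_{L^{2q}(Ω)}²) / ‖u‖_{L²(Ω)}²`. -/
def Jfun (α₁ α₂ M qe : ℝ) (u gx gy : ℝ × ℝ → ℝ) : ℝ :=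
  (a1Form α₁ α₂ u gx gy u gx gy +
    M * (∫ p in Omega, |u p| ^ (2 * qe)) ^ (1 / qe)) / (∫ p in Omega, (u p) ^ 2)

open scoped Topology


/-- Directional derivative. -/
def DD (v : ℝ × ℝ) (φ : ℝ × ℝ → ℝ) (p : ℝ × ℝ) : ℝ := fderiv ℝ φ p v

lemma pdx_eq (φ : ℝ × ℝ → ℝ) : pdx φ = DD (1, 0) φ := rfl
lemma pdy_eq (φ : ℝ × ℝ → ℝ) : pdy φ = DD (0, 1) φ := rfl

lemma DD_contDiff {φ : ℝ × ℝ → ℝ} (h : ContDiff ℝ (⊤ : ℕ∞) φ) (v : ℝ × ℝ) :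
    ContDiff ℝ (⊤ : ℕ∞) (DD v φ) := by
  have h1 : ContDiff ℝ (⊤ : ℕ∞) (fderiv ℝ φ) := h.fderiv_right (by simp)
  exact h1.clm_apply contDiff_const

lemma DD_tsupport (φ : ℝ × ℝ → ℝ) (v : ℝ × ℝ) : tsupport (DD v φ) ⊆ tsupport φ := by
  refine (closure_mono ?_).trans (tsupport_fderiv_subset ℝ (f := φ))
  intro p hp
  simp only [DD, Function.mem_support] at hp ⊢
  intro h
  simp [h] at hp

lemma IsTestOn.DD {s : Set (ℝ × ℝ)} {φ : ℝ × ℝ → ℝ} (h : IsTestOn s φ) (v : ℝ × ℝ) :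
    IsTestOn s (DD v φ) := by
  refine ⟨DD_contDiff h.1 v, ?_, (DD_tsupport φ v).trans h.2.2⟩
  exact h.2.1.of_isClosed_subset (isClosed_tsupport _) (DD_tsupport φ v)

lemma IsTestOn.mono {s t : Set (ℝ × ℝ)} {φ : ℝ × ℝ → ℝ} (h : IsTestOn s φ) (hst : s ⊆ t) :
    IsTestOn t φ := ⟨h.1, h.2.1, h.2.2.trans hst⟩

lemma IsTestOn.mul_right {s : Set (ℝ × ℝ)} {φ ψ : ℝ × ℝ → ℝ} (h : IsTestOn s φ)
    (hψ : ContDiff ℝ (⊤ : ℕ∞) ψ) : IsTestOn s (fun p => ψ p * φ p) := by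
  refine ⟨hψ.mul h.1, h.2.1.mul_left, ?_⟩
  exact (tsupport_mul_subset_right (f := ψ) (g := φ)).trans h.2.2

lemma DD_mul {φ ψ : ℝ × ℝ → ℝ} (hφ : ContDiff ℝ (⊤ : ℕ∞) φ)
    (hψ : ContDiff ℝ (⊤ : ℕ∞) ψ) (v p : ℝ × ℝ) :
    DD v (fun p => φ p * ψ p) p = φ p * DD v ψ p + ψ p * DD v φ p := by
  have h1 := (hφ.differentiable (by simp) p)
  have h2 := (hψ.differentiable (by simp) p)
  simp only [DD]
  rw [show (fun p => φ p * ψ p) = φ * ψ from rfl, fderiv_mul h1 h2]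
  simp

lemma DD_comp {φ : ℝ × ℝ → ℝ} {θ : ℝ → ℝ} (hφ : ContDiff ℝ (⊤ : ℕ∞) φ)
    (hθ : ContDiff ℝ (⊤ : ℕ∞) θ) (v p : ℝ × ℝ) :
    DD v (fun p => θ (φ p)) p = deriv θ (φ p) * DD v φ p := by
  have h1 := (hφ.differentiable (by simp) p).hasFDerivAt
  have h2 := (hθ.differentiable (by simp) (φ p)).hasDerivAt
  have := h2.comp_hasFDerivAt p h1
  simp only [DD]
  rw [show (fun p => θ (φ p)) = θ ∘ φ from rfl, this.fderiv]
  simp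

lemma DD_comm {φ : ℝ × ℝ → ℝ} (hφ : ContDiff ℝ (⊤ : ℕ∞) φ) (v w : ℝ × ℝ) :
    DD v (DD w φ) = DD w (DD v φ) := by
  have key : ∀ v w p, DD v (DD w φ) p = fderiv ℝ (fderiv ℝ φ) p v w := by
    intro v w p
    have h1 : ContDiff ℝ (⊤ : ℕ∞) (fderiv ℝ φ) := hφ.fderiv_right (by simp)
    have h2 := (h1.differentiable (by simp) p)
    show fderiv ℝ (fun q => fderiv ℝ φ q w) p v = _
    rw [fderiv_clm_apply h2 (by fun_prop)]
    simp
  funext p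
  rw [key, key]
  exact (hφ.contDiffAt.isSymmSndFDerivAt (by rw [minSmoothness_of_isRCLikeNormedField]; exact WithTop.coe_le_coe.2 (le_top : (2:ℕ∞) ≤ ⊤))) v w

lemma IsTestOn.continuous {s : Set (ℝ × ℝ)} {φ : ℝ × ℝ → ℝ} (h : IsTestOn s φ) :
    Continuous φ := h.1.continuous

lemma IsTestOn.memLp {s : Set (ℝ × ℝ)} {φ : ℝ × ℝ → ℝ} (h : IsTestOn s φ) (q : ENNReal) :
    MemLp φ q volume := h.1.continuous.memLp_of_hasCompactSupport h.2.1

lemma IsTestOn.bdd {s : Set (ℝ × ℝ)} {φ : ℝ × ℝ → ℝ} (h : IsTestOn s φ) :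
    ∃ C, ∀ p, |φ p| ≤ C := by
  obtain ⟨C, hC⟩ := h.2.1.exists_bound_of_continuous h.1.continuous
  exact ⟨C, hC⟩

lemma IsTestOn.integrable {s : Set (ℝ × ℝ)} {φ : ℝ × ℝ → ℝ} (h : IsTestOn s φ) :
    Integrable φ volume := h.1.continuous.integrable_of_hasCompactSupport h.2.1

lemma L2_mul {μ : Measure (ℝ × ℝ)} {f g : ℝ × ℝ → ℝ} (hf : MemLp f 2 μ) (hg : MemLp g 2 μ) :
    Integrable (fun p => f p * g p) μ := hf.integrable_mul hg

lemma IBP {s t : Set (ℝ × ℝ)} {φ ψ : ℝ × ℝ → ℝ} (hφ : IsTestOn s φ) (hψ : IsTestOn t ψ)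
    (v : ℝ × ℝ) : ∫ p, φ p * DD v ψ p = - ∫ p, DD v φ p * ψ p := by
  exact integral_mul_fderiv_eq_neg_fderiv_mul_of_integrable
    (L2_mul ((hφ.DD v).memLp 2) (hψ.memLp 2)) (L2_mul (hφ.memLp 2) ((hψ.DD v).memLp 2))
    (L2_mul (hφ.memLp 2) (hψ.memLp 2)) (fun x _ => hφ.1.differentiable (by simp) x)
    (fun x _ => hψ.1.differentiable (by simp) x)

/-- Cauchy-Schwarz. -/
lemma CS {μ : Measure (ℝ × ℝ)} {f g : ℝ × ℝ → ℝ} (hf : MemLp f 2 μ) (hg : MemLp g 2 μ) :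
    (∫ p, f p * g p ∂μ) ^ 2 ≤ (∫ p, (f p) ^ 2 ∂μ) * (∫ p, (g p) ^ 2 ∂μ) := by
  have h1 := hf.integrable_sq
  have h2 := hg.integrable_sq
  have h3 := L2_mul hf hg
  have key : ∀ t : ℝ, 0 ≤ (∫ p, (g p) ^ 2 ∂μ) * (t * t) + (2 * ∫ p, f p * g p ∂μ) * t
      + ∫ p, (f p) ^ 2 ∂μ := by
    intro t
    have : ∫ p, (f p + t * g p) ^ 2 ∂μ = (∫ p, (g p) ^ 2 ∂μ) * (t * t)
        + (2 * ∫ p, f p * g p ∂μ) * t + ∫ p, (f p) ^ 2 ∂μ := by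
      have e : ∀ p, (f p + t * g p) ^ 2 = (g p) ^ 2 * (t * t) + (2 * t) * (f p * g p)
        + (f p) ^ 2 := fun p => by ring
      simp only [e]
      rw [integral_add ((h2.mul_const _).fun_add (h3.const_mul _)) h1,
        integral_add (h2.mul_const _) (h3.const_mul _), integral_mul_const, integral_const_mul]
      ring
    rw [← this]
    exact integral_nonneg fun p => sq_nonneg _
  have := discrim_le_zero key
  simp only [discrim] at this
  nlinarith

/-- Sobolev inequality in dimension two. -/
lemma GNS : ∃ C : ℝ, 0 ≤ C ∧ ∀ φ : ℝ × ℝ → ℝ, IsTestOn univ φ →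
    ∫ p, (φ p) ^ 2 ≤ C * (∫ p, (|DD (1, 0) φ p| + |DD (0, 1) φ p|)) ^ 2 := by
  have hfr : Module.finrank ℝ (ℝ × ℝ) = 2 := by simp
  have hconj : Real.HolderConjugate (Module.finrank ℝ (ℝ × ℝ)) 2 := by
    rw [hfr]; constructor <;> norm_num
  refine ⟨lintegralPowLePowLIntegralFDerivConst (volume : Measure (ℝ × ℝ)) 2,
    NNReal.coe_nonneg _, ?_⟩
  intro φ hφ
  have h := lintegral_pow_le_pow_lintegral_fderiv (volume : Measure (ℝ × ℝ))
    (hφ.1.of_le (by simp)) hφ.2.1 hconj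
  have i1 : Integrable (fun p => |DD (1, 0) φ p| + |DD (0, 1) φ p|) volume :=
    (hφ.DD _).integrable.abs.add (hφ.DD _).integrable.abs
  have hb : ∫⁻ x, ‖fderiv ℝ φ x‖ₑ ≤
      ENNReal.ofReal (∫ p, (|DD (1, 0) φ p| + |DD (0, 1) φ p|)) := by
    rw [ofReal_integral_eq_lintegral_ofReal i1 (ae_of_all _ fun p => by positivity)]
    refine lintegral_mono fun p => ?_
    rw [← ofReal_norm]
    refine ENNReal.ofReal_le_ofReal ?_
    refine ContinuousLinearMap.opNorm_le_bound _ (by positivity) fun q => ?_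
    have : fderiv ℝ φ p q = q.1 * DD (1, 0) φ p + q.2 * DD (0, 1) φ p := by
      simp only [DD]
      have : q = q.1 • ((1, 0) : ℝ × ℝ) + q.2 • ((0, 1) : ℝ × ℝ) := by ext <;> simp
      conv_lhs => rw [this, map_add, map_smul, map_smul]
      simp
    rw [this, Real.norm_eq_abs]
    refine (abs_add_le _ _).trans ?_
    rw [abs_mul, abs_mul]
    have a1 : |q.1| ≤ ‖q‖ := norm_fst_le q
    have a2 : |q.2| ≤ ‖q‖ := norm_snd_le q
    nlinarith [mul_le_mul_of_nonneg_right a1 (abs_nonneg (DD (1, 0) φ p)),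
      mul_le_mul_of_nonneg_right a2 (abs_nonneg (DD (0, 1) φ p))]
  have i2 : Integrable (fun p => (φ p) ^ 2) volume := (hφ.memLp 2).integrable_sq
  have e1 : ∫⁻ x, ‖φ x‖ₑ ^ (2 : ℝ) = ENNReal.ofReal (∫ p, (φ p) ^ 2) := by
    rw [ofReal_integral_eq_lintegral_ofReal i2 (ae_of_all _ fun p => by positivity)]
    refine lintegral_congr fun p => ?_
    rw [← ofReal_norm, ENNReal.ofReal_rpow_of_nonneg (norm_nonneg _) (by norm_num)]
    simp
  rw [e1] at h
  have hI : 0 ≤ ∫ p, (|DD (1, 0) φ p| + |DD (0, 1) φ p|) :=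
    integral_nonneg fun p => by positivity
  have h' := h.trans (mul_le_mul_right (ENNReal.rpow_le_rpow hb (by norm_num : (0:ℝ) ≤ 2)) _)
  rw [ENNReal.ofReal_rpow_of_nonneg hI (by norm_num), ← ENNReal.ofReal_coe_nnreal,
    ← ENNReal.ofReal_mul (NNReal.coe_nonneg _)] at h'
  have := (ENNReal.ofReal_le_ofReal_iff (by positivity)).1 h'
  simpa using this


lemma CSw {μ : Measure (ℝ × ℝ)} {b f : ℝ × ℝ → ℝ} (hb : ∀ p, 0 ≤ b p) (h1 : Integrable b μ)
    (h2 : Integrable (fun p => b p * f p) μ) (h3 : Integrable (fun p => b p * (f p) ^ 2) μ) :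
    (∫ p, b p * f p ∂μ) ^ 2 ≤ (∫ p, b p ∂μ) * (∫ p, b p * (f p) ^ 2 ∂μ) := by
  have key : ∀ t : ℝ, 0 ≤ (∫ p, b p ∂μ) * (t * t) + (2 * ∫ p, b p * f p ∂μ) * t
      + ∫ p, b p * (f p) ^ 2 ∂μ := by
    intro t
    have : ∫ p, b p * (f p + t) ^ 2 ∂μ = (∫ p, b p ∂μ) * (t * t)
        + (2 * ∫ p, b p * f p ∂μ) * t + ∫ p, b p * (f p) ^ 2 ∂μ := by
      have e : ∀ p, b p * (f p + t) ^ 2 = b p * (t * t) + (2 * t) * (b p * f p)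
        + b p * (f p) ^ 2 := fun p => by ring
      simp only [e]
      rw [integral_add ((h1.mul_const _).fun_add (h2.const_mul _)) h3,
        integral_add (h1.mul_const _) (h2.const_mul _), integral_mul_const, integral_const_mul]
      ring
    rw [← this]
    exact integral_nonneg fun p => mul_nonneg (hb p) (sq_nonneg _)
  have := discrim_le_zero key
  simp only [discrim] at this
  nlinarith

lemma tendsto_zero_of_sq_le {x y : ℕ → ℝ} (h : ∀ n, (x n) ^ 2 ≤ y n)
    (hy : Tendsto y atTop (𝓝 0)) : Tendsto x atTop (𝓝 0) := by
  have h1 : Tendsto (fun n => (x n) ^ 2) atTop (𝓝 0) :=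
    squeeze_zero (fun n => sq_nonneg _) h hy
  have h2 := (Real.continuous_sqrt.tendsto 0).comp h1
  simp only [Real.sqrt_zero] at h2
  refine (tendsto_zero_iff_abs_tendsto_zero _).2 (h2.congr fun n => ?_)
  simp [Real.sqrt_sq_eq_abs]

lemma conv3 {μ : Measure (ℝ × ℝ)} {b : ℕ → ℝ × ℝ → ℝ} {b' : ℝ × ℝ → ℝ} {M : ℝ}
    {s t : ℕ → ℝ × ℝ → ℝ} {s' t' : ℝ × ℝ → ℝ}
    (hbm : ∀ n, AEStronglyMeasurable (b n) μ) (hbM : ∀ n p, |b n p| ≤ M)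
    (hb : ∀ᵐ p ∂μ, Tendsto (fun n => b n p) atTop (𝓝 (b' p)))
    (hs : ∀ n, MemLp (s n) 2 μ) (hs' : MemLp s' 2 μ)
    (ht : ∀ n, MemLp (t n) 2 μ) (ht' : MemLp t' 2 μ)
    (hsc : Tendsto (fun n => ∫ p, (s n p - s' p) ^ 2 ∂μ) atTop (𝓝 0))
    (htc : Tendsto (fun n => ∫ p, (t n p - t' p) ^ 2 ∂μ) atTop (𝓝 0)) :
    Tendsto (fun n => ∫ p, b n p * (s n p * t n p) ∂μ) atTop
      (𝓝 (∫ p, b' p * (s' p * t' p) ∂μ)) := by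
  have hM : 0 ≤ M := (abs_nonneg _).trans (hbM 0 (0, 0))
  have mb : ∀ n {g : ℝ × ℝ → ℝ}, MemLp g 2 μ → MemLp (fun p => b n p * g p) 2 μ := by
    intro n g hg
    refine MemLp.of_le_mul (c := M) hg ((hbm n).mul hg.1) (ae_of_all _ fun p => ?_)
    rw [norm_mul]
    exact mul_le_mul_of_nonneg_right (hbM n p) (norm_nonneg _)
  have mbsq : ∀ n {g : ℝ × ℝ → ℝ}, MemLp g 2 μ →
      ∫ p, (b n p * g p) ^ 2 ∂μ ≤ M ^ 2 * ∫ p, (g p) ^ 2 ∂μ := by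
    intro n g hg
    rw [← integral_const_mul]
    refine integral_mono (mb n hg).integrable_sq (hg.integrable_sq.const_mul _) fun p => ?_
    simp only [mul_pow]
    have : (b n p) ^ 2 ≤ M ^ 2 := by
      rw [← sq_abs]; exact pow_le_pow_left₀ (abs_nonneg _) (hbM n p) 2
    exact mul_le_mul_of_nonneg_right this (sq_nonneg _)
  have T3 : Tendsto (fun n => ∫ p, b n p * (s' p * t' p) ∂μ) atTop
      (𝓝 (∫ p, b' p * (s' p * t' p) ∂μ)) := by
    refine tendsto_integral_of_dominated_convergence (fun p => M * |s' p * t' p|) ?_ ?_ ?_ ?_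
    · intro n; exact (hbm n).mul (L2_mul hs' ht').1
    · exact (L2_mul hs' ht').abs.const_mul M
    · intro n
      refine ae_of_all _ fun p => ?_
      rw [norm_mul]
      exact mul_le_mul_of_nonneg_right (hbM n p) (norm_nonneg _)
    · filter_upwards [hb] with p hp
      exact hp.mul_const _
  have T1 : Tendsto (fun n => ∫ p, (s n p - s' p) * (b n p * t n p) ∂μ) atTop (𝓝 0) := by
    refine tendsto_zero_of_sq_le (y := fun n => (∫ p, (s n p - s' p) ^ 2 ∂μ) *
      (M ^ 2 * (2 * (∫ p, (t n p - t' p) ^ 2 ∂μ) + 2 * ∫ p, (t' p) ^ 2 ∂μ))) ?_ ?_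
    · intro n
      refine (CS ((hs n).sub hs') (mb n (ht n))).trans ?_
      refine mul_le_mul_of_nonneg_left ?_ (integral_nonneg fun p => sq_nonneg _)
      refine (mbsq n (ht n)).trans (mul_le_mul_of_nonneg_left ?_ (sq_nonneg _))
      rw [← integral_const_mul, ← integral_const_mul, ← integral_add]
      · refine integral_mono (ht n).integrable_sq ?_ fun p => ?_
        · exact (((ht n).sub ht').integrable_sq.const_mul 2).add (ht'.integrable_sq.const_mul 2)
        · simp only
          nlinarith [sq_nonneg (t n p - 2 * t' p)]
      · exact ((ht n).sub ht').integrable_sq.const_mul 2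
      · exact ht'.integrable_sq.const_mul 2
    · have := hsc.mul (((htc.const_mul 2).add_const (2 * ∫ p, (t' p) ^ 2 ∂μ)).const_mul (M ^ 2))
      simpa using this
  have T2 : Tendsto (fun n => ∫ p, (t n p - t' p) * (b n p * s' p) ∂μ) atTop (𝓝 0) := by
    refine tendsto_zero_of_sq_le (y := fun n => (∫ p, (t n p - t' p) ^ 2 ∂μ) *
      (M ^ 2 * ∫ p, (s' p) ^ 2 ∂μ)) ?_ ?_
    · intro n
      refine (CS ((ht n).sub ht') (mb n hs')).trans ?_
      exact mul_le_mul_of_nonneg_left (mbsq n hs') (integral_nonneg fun p => sq_nonneg _)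
    · simpa using htc.mul_const (M ^ 2 * ∫ p, (s' p) ^ 2 ∂μ)
  have := (T1.add T2).add T3
  simp only [zero_add] at this
  refine this.congr fun n => ?_
  have i1 : Integrable (fun p => (s n p - s' p) * (b n p * t n p)) μ :=
    L2_mul ((hs n).sub hs') (mb n (ht n))
  have i2 : Integrable (fun p => (t n p - t' p) * (b n p * s' p)) μ :=
    L2_mul ((ht n).sub ht') (mb n hs')
  have i3 : Integrable (fun p => b n p * (s' p * t' p)) μ := by
    have := L2_mul (mb n hs') ht'
    simpa only [mul_assoc] using this
  rw [← integral_add i1 i2, ← integral_add (i1.fun_add i2) i3]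
  refine integral_congr_ae (ae_of_all _ fun p => ?_)
  simp only
  ring

/-- Stampacchia iteration lemma. -/
lemma stampacchia {m : ℝ → ℝ} {D : ℝ} (hD : 0 ≤ D) (hm0 : ∀ k, 0 ≤ m k) (hm1 : m 0 ≤ 1)
    (h : ∀ k l, 0 ≤ k → k < l → m l ≤ D / (l - k) * (m k * Real.sqrt (m k)))
    (hmono : ∀ k l, 0 ≤ k → k ≤ l → m l ≤ m k) :
    ∃ K, 0 ≤ K ∧ m K = 0 := by
  set K := 8 * (D + 1) with hK
  have hKpos : 0 < K := by positivity
  let k : ℕ → ℝ := fun j => K * (1 - (1/2) ^ j)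
  have hk0 : ∀ j, 0 ≤ k j := fun j => mul_nonneg hKpos.le (by
    have : ((1:ℝ)/2) ^ j ≤ 1 := pow_le_one₀ (by norm_num) (by norm_num)
    linarith)
  have hkK : ∀ j, k j ≤ K := fun j => by
    have : (0:ℝ) ≤ (1/2) ^ j := by positivity
    show K * (1 - (1/2) ^ j) ≤ K
    nlinarith
  have key : ∀ j, m (k j) ≤ (1/4) ^ j := by
    intro j
    induction j with
    | zero => simpa [k] using hm1
    | succ j ih =>
      have hd : k (j+1) - k j = K * (1/2) ^ (j+1) := by
        simp only [k]; ring
      have hpos : 0 < k (j+1) - k j := by rw [hd]; positivity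
      refine (h (k j) (k (j+1)) (hk0 j) (by linarith)).trans ?_
      rw [hd]
      have hs : Real.sqrt (m (k j)) ≤ (1/2) ^ j := by
        rw [Real.sqrt_le_left (by positivity)]
        calc m (k j) ≤ (1/4) ^ j := ih
          _ = ((1/2) ^ j) ^ 2 := by rw [← pow_mul, mul_comm, pow_mul]; norm_num
      calc D / (K * (1/2) ^ (j+1)) * (m (k j) * Real.sqrt (m (k j)))
          ≤ D / (K * (1/2) ^ (j+1)) * ((1/4) ^ j * (1/2) ^ j) := by
            refine mul_le_mul_of_nonneg_left ?_ (by positivity)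
            exact mul_le_mul ih hs (Real.sqrt_nonneg _) (by positivity)
        _ = (D / (4 * (D + 1))) * (1/4) ^ j := by
            rw [hK, pow_succ]; field_simp; ring
        _ ≤ (1/4) * (1/4) ^ j := by
            refine mul_le_mul_of_nonneg_right ?_ (by positivity)
            rw [div_le_div_iff₀ (by positivity) (by norm_num)]
            linarith
        _ = (1/4) ^ (j+1) := by ring
  refine ⟨K, hKpos.le, le_antisymm ?_ (hm0 _)⟩
  have ht : Tendsto (fun j : ℕ => ((1:ℝ)/4) ^ j) atTop (𝓝 0) :=
    tendsto_pow_atTop_nhds_zero_of_lt_one (by norm_num) (by norm_num)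
  refine ge_of_tendsto' ht fun j => (hmono _ _ (hk0 j) (hkK j)).trans (key j)

/-- Smooth steps. -/
lemma exists_step : ∃ M : ℝ, 0 ≤ M ∧ ∀ k l : ℝ, k < l → ∃ θ : ℝ → ℝ,
    ContDiff ℝ (⊤ : ℕ∞) θ ∧ (∀ t, 0 ≤ θ t) ∧ (∀ t, θ t ≤ 1) ∧ (∀ t, t ≤ k → θ t = 0) ∧
    (∀ t, l ≤ t → θ t = 1) ∧ (∀ t, 0 ≤ deriv θ t) ∧ (∀ t, deriv θ t ≤ M / (l - k)) ∧
    (∀ t, t ≤ k → deriv θ t = 0) := by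
  have hc : ContDiff ℝ (⊤ : ℕ∞) Real.smoothTransition := Real.smoothTransition.contDiff
  have hmono : Monotone Real.smoothTransition := Real.smoothTransition.monotone
  have hd : ∀ t, 0 ≤ deriv Real.smoothTransition t := fun t => hmono.deriv_nonneg
  have hcd : Continuous (deriv Real.smoothTransition) := hc.continuous_deriv (by simp)
  have h0 : ∀ t, t ≤ 0 → deriv Real.smoothTransition t = 0 := by
    have : ∀ t, t < 0 → deriv Real.smoothTransition t = 0 := by
      intro t ht
      have : Real.smoothTransition =ᶠ[𝓝 t] fun _ => 0 := by
        filter_upwards [Iio_mem_nhds ht] with s hs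
        exact Real.smoothTransition.zero_of_nonpos (le_of_lt hs)
      rw [this.deriv_eq]; simp
    intro t ht
    have hcl : closure (Iio (0:ℝ)) ⊆ {t | deriv Real.smoothTransition t = 0} :=
      closure_minimal (fun t ht => this t ht) (isClosed_eq hcd continuous_const)
    exact hcl (by simpa using ht)
  have h1 : ∀ t, 1 < t → deriv Real.smoothTransition t = 0 := by
    intro t ht
    have : Real.smoothTransition =ᶠ[𝓝 t] fun _ => 1 := by
      filter_upwards [Ioi_mem_nhds ht] with s hs
      exact Real.smoothTransition.one_of_one_le (le_of_lt hs)
    rw [this.deriv_eq]; simp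
  obtain ⟨M, hM⟩ := (isCompact_Icc (a := (0:ℝ)) (b := 1)).exists_bound_of_continuousOn
    hcd.continuousOn
  have hM0 : 0 ≤ M := (norm_nonneg _).trans (hM 0 (by simp))
  have hMb : ∀ t, deriv Real.smoothTransition t ≤ M := by
    intro t
    rcases le_or_gt t 0 with h | h
    · rw [h0 t h]; exact hM0
    rcases le_or_gt t 1 with h' | h'
    · exact (le_abs_self _).trans (hM t ⟨h.le, h'⟩)
    · rw [h1 t h']; exact hM0
  refine ⟨M, hM0, fun k l hkl => ?_⟩
  have hlk : 0 < l - k := by linarith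
  have hder : ∀ t, deriv (fun t => Real.smoothTransition ((t - k) / (l - k))) t
      = deriv Real.smoothTransition ((t - k) / (l - k)) / (l - k) := by
    intro t
    have a : HasDerivAt (fun t => (t - k) / (l - k)) (1 / (l - k)) t :=
      ((hasDerivAt_id t).sub_const k).div_const _
    have b := (hc.differentiable (by simp) ((t - k) / (l - k))).hasDerivAt
    have := (b.comp t a).deriv
    rw [show (fun t => Real.smoothTransition ((t - k) / (l - k)))
      = Real.smoothTransition ∘ (fun t => (t - k) / (l - k)) from rfl, this]
    ring
  refine ⟨fun t => Real.smoothTransition ((t - k) / (l - k)), ?_, fun t =>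
    Real.smoothTransition.nonneg _, fun t => Real.smoothTransition.le_one _, ?_, ?_, ?_, ?_, ?_⟩
  · exact hc.comp ((contDiff_id.sub contDiff_const).div_const _)
  · intro t ht
    exact Real.smoothTransition.zero_of_nonpos (div_nonpos_of_nonpos_of_nonneg (by linarith) hlk.le)
  · intro t ht
    refine Real.smoothTransition.one_of_one_le ?_
    rw [le_div_iff₀ hlk]; linarith
  · intro t; rw [hder]; exact div_nonneg (hd _) hlk.le
  · intro t; rw [hder]; exact div_le_div_of_nonneg_right (hMb _) hlk.le
  · intro t ht; rw [hder, h0 _ (div_nonpos_of_nonpos_of_nonneg (by linarith) hlk.le)]; simp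


lemma measurableSet_Omega : MeasurableSet Omega := measurableSet_Ioo.prod measurableSet_Ioo

lemma isOpen_Omega : IsOpen Omega := isOpen_Ioo.prod isOpen_Ioo

lemma volume_Omega : volume Omega = 1 := by
  rw [Omega, Measure.volume_eq_prod, Measure.prod_prod]; simp

lemma IsTestOn.zero_off {s : Set (ℝ × ℝ)} {φ : ℝ × ℝ → ℝ} (h : IsTestOn s φ) {p : ℝ × ℝ}
    (hp : p ∉ s) : φ p = 0 := by
  by_contra hne
  exact hp (h.2.2 (subset_tsupport φ hne))

lemma IsTestOn.comp_zero {s : Set (ℝ × ℝ)} {φ : ℝ × ℝ → ℝ} (h : IsTestOn s φ) {θ : ℝ → ℝ}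
    (hθ : ContDiff ℝ (⊤ : ℕ∞) θ) (h0 : θ 0 = 0) : IsTestOn s (fun p => θ (φ p)) := by
  refine ⟨hθ.comp h.1, h.2.1.comp_left h0, ?_⟩
  refine (closure_mono ?_).trans h.2.2
  intro p hp hφ
  exact hp (by simp [hφ, h0])

lemma integrable_indicator_Omega (M : ℝ) :
    Integrable (Omega.indicator (fun _ : ℝ × ℝ => M)) volume := by
  rw [integrable_indicator_iff measurableSet_Omega]
  exact integrableOn_const (by rw [volume_Omega]; simp)

/-- Dominated convergence for bounded functions of `z n` vanishing at zero. -/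
lemma dct_bdd {z : ℕ → ℝ × ℝ → ℝ} {w : ℝ × ℝ → ℝ} (hz : ∀ n, IsTestOn Omega (z n))
    (hae : ∀ᵐ p, Tendsto (fun n => z n p) atTop (𝓝 (w p)))
    {β : ℝ → ℝ} (hβ : Continuous β) {M : ℝ} (hM : ∀ t, |β t| ≤ M) (h0 : β 0 = 0) :
    Tendsto (fun n => ∫ p, β (z n p)) atTop (𝓝 (∫ p, β (w p))) := by
  refine tendsto_integral_of_dominated_convergence (Omega.indicator (fun _ => M)) ?_
    (integrable_indicator_Omega M) ?_ ?_
  · intro n; exact (hβ.comp (hz n).continuous).aestronglyMeasurable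
  · intro n
    refine ae_of_all _ fun p => ?_
    by_cases hp : p ∈ Omega
    · simp only [hp, indicator_of_mem]; exact hM _
    · rw [(hz n).zero_off hp]; simp [hp, h0]
  · filter_upwards [hae] with p hp
    exact (hβ.tendsto _).comp hp

lemma integrable_bdd {w : ℝ × ℝ → ℝ} (hw : AEStronglyMeasurable w volume)
    (hw0 : ∀ p, p ∉ Omega → w p = 0)
    {β : ℝ → ℝ} (hβ : Measurable β) {M : ℝ} (hM : ∀ t, |β t| ≤ M) (h0 : β 0 = 0) :
    Integrable (fun p => β (w p)) volume := by
  refine (integrable_indicator_Omega M).mono' ?_ ?_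
  · exact (hβ.comp_aemeasurable hw.aemeasurable).aestronglyMeasurable
  · refine ae_of_all _ fun p => ?_
    by_cases hp : p ∈ Omega
    · simp only [hp, indicator_of_mem]; exact hM _
    · rw [hw0 p hp]; simp [hp, h0]

structure Data (c : ℝ) (A B w wx wy G V : ℝ × ℝ → ℝ) (z : ℕ → ℝ × ℝ → ℝ) : Prop where
  cpos : 0 < c
  Acont : Continuous A
  Bcont : Continuous B
  Alow : ∀ p, c ≤ A p
  Blow : ∀ p, c ≤ B p
  Abd : ∃ C, ∀ p, |A p| ≤ C
  Bbd : ∃ C, ∀ p, |B p| ≤ C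
  hw : MemLp w 2 volume
  hwx : MemLp wx 2 volume
  hwy : MemLp wy 2 volume
  hG : MemLp G 2 volume
  hV : MemLp V 2 volume
  hGi : Integrable G volume
  Vpos : ∀ᵐ p, 0 ≤ V p
  hw0 : ∀ p, p ∉ Omega → w p = 0
  hz : ∀ n, IsTestOn Omega (z n)
  hae : ∀ᵐ p, Tendsto (fun n => z n p) atTop (𝓝 (w p))
  hzx : Tendsto (fun n => ∫ p, (DD (1, 0) (z n) p - wx p) ^ 2) atTop (𝓝 0)
  hzy : Tendsto (fun n => ∫ p, (DD (0, 1) (z n) p - wy p) ^ 2) atTop (𝓝 0)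
  eq : ∀ φ, IsTestOn univ φ → ∫ p, (A p * wx p * DD (1, 0) φ p + B p * wy p * DD (0, 1) φ p)
    = ∫ p, (G p - V p * w p) * φ p

lemma memLp_bdd_mul {A g : ℝ × ℝ → ℝ} (hA : Continuous A) (hb : ∃ C, ∀ p, |A p| ≤ C)
    {q : ENNReal} (hg : MemLp g q volume) : MemLp (fun p => A p * g p) q volume := by
  obtain ⟨C, hC⟩ := hb
  refine MemLp.of_le_mul (c := C) hg (hA.aestronglyMeasurable.mul hg.1) (ae_of_all _ fun p => ?_)
  rw [norm_mul]
  exact mul_le_mul_of_nonneg_right (hC p) (norm_nonneg _)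

/-- Level indicator. -/
def Jk (k : ℝ) : ℝ → ℝ := (Ioi k).indicator (fun _ => 1)

lemma Jk_meas (k : ℝ) : Measurable (Jk k) := measurable_const.indicator measurableSet_Ioi
lemma Jk_nonneg (k t : ℝ) : 0 ≤ Jk k t := by unfold Jk; exact indicator_nonneg (by simp) t
lemma Jk_of_lt {k t : ℝ} (h : k < t) : Jk k t = 1 := by simp [Jk, h]
lemma Jk_of_le {k t : ℝ} (h : t ≤ k) : Jk k t = 0 := by simp [Jk, not_lt.2 h]
lemma Jk_abs (k t : ℝ) : |Jk k t| ≤ 1 := by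
  rcases lt_or_ge k t with h | h
  · simp [Jk_of_lt h]
  · simp [Jk_of_le h]

section
variable {c : ℝ} {A B w wx wy G V : ℝ × ℝ → ℝ} {z : ℕ → ℝ × ℝ → ℝ}

lemma Data.energy (d : Data c A B w wx wy G V z) {θ : ℝ → ℝ} (hθ : ContDiff ℝ (⊤ : ℕ∞) θ)
    (h0 : ∀ t, 0 ≤ θ t) (h1 : ∀ t, θ t ≤ 1) {k M : ℝ} (hk : 0 ≤ k) (hz0 : ∀ t, t ≤ k → θ t = 0)
    (hd0 : ∀ t, 0 ≤ deriv θ t) (hdM : ∀ t, deriv θ t ≤ M) :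
    c * ((∫ p, deriv θ (w p) * (wx p * wx p)) + ∫ p, deriv θ (w p) * (wy p * wy p)) ≤
      ∫ p, |G p| * Jk k (w p) := by
  have hθc : Continuous (deriv θ) := hθ.continuous_deriv (by simp)
  have hda : ∀ t, |deriv θ t| ≤ M := fun t => by rw [abs_of_nonneg (hd0 t)]; exact hdM t
  have mx : MemLp (fun p => A p * wx p) 2 volume := memLp_bdd_mul d.Acont d.Abd d.hwx
  have my : MemLp (fun p => B p * wy p) 2 volume := memLp_bdd_mul d.Bcont d.Bbd d.hwy
  have hbm : ∀ n, AEStronglyMeasurable (fun p => deriv θ (z n p)) volume := fun n =>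
    (hθc.comp (d.hz n).continuous).aestronglyMeasurable
  have hbl : ∀ᵐ p, Tendsto (fun n => deriv θ (z n p)) atTop (𝓝 (deriv θ (w p))) := by
    filter_upwards [d.hae] with p hp
    exact (hθc.tendsto _).comp hp
  have T1 := conv3 (s := fun _ => fun p => A p * wx p) hbm (fun n p => hda (z n p)) hbl (fun _ => mx) mx
    (fun n => ((d.hz n).DD (1, 0)).memLp 2) d.hwx (by simp) d.hzx
  have T2 := conv3 (s := fun _ => fun p => B p * wy p) hbm (fun n p => hda (z n p)) hbl (fun _ => my) my
    (fun n => ((d.hz n).DD (0, 1)).memLp 2) d.hwy (by simp) d.hzy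
  have hR : Integrable (fun p => G p - V p * w p) volume := d.hGi.sub (L2_mul d.hV d.hw)
  have T3 : Tendsto (fun n => ∫ p, (G p - V p * w p) * θ (z n p)) atTop
      (𝓝 (∫ p, (G p - V p * w p) * θ (w p))) := by
    refine tendsto_integral_of_dominated_convergence (fun p => |G p - V p * w p|) ?_ hR.abs ?_ ?_
    · intro n; exact hR.1.mul (hθ.continuous.comp (d.hz n).continuous).aestronglyMeasurable
    · intro n; refine ae_of_all _ fun p => ?_
      rw [norm_mul, Real.norm_eq_abs, Real.norm_eq_abs, abs_of_nonneg (h0 _)]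
      exact mul_le_of_le_one_right (abs_nonneg _) (h1 _)
    · filter_upwards [d.hae] with p hp
      exact ((hθ.continuous.tendsto _).comp hp).const_mul _
  have heq : ∀ n, (∫ p, deriv θ (z n p) * (A p * wx p * DD (1, 0) (z n) p)) +
      (∫ p, deriv θ (z n p) * (B p * wy p * DD (0, 1) (z n) p)) =
      ∫ p, (G p - V p * w p) * θ (z n p) := by
    intro n
    have ht : IsTestOn univ (fun p => θ (z n p)) :=
      ((d.hz n).comp_zero hθ (hz0 0 hk)).mono (subset_univ _)
    rw [← d.eq _ ht]
    have e : ∀ v p, DD v (fun p => θ (z n p)) p = deriv θ (z n p) * DD v (z n) p :=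
      fun v p => DD_comp (d.hz n).1 hθ v p
    have i1 : Integrable (fun p => A p * wx p * DD (1, 0) (fun p => θ (z n p)) p) volume :=
      L2_mul mx ((ht.DD _).memLp 2)
    have i2 : Integrable (fun p => B p * wy p * DD (0, 1) (fun p => θ (z n p)) p) volume :=
      L2_mul my ((ht.DD _).memLp 2)
    rw [integral_add i1 i2]
    simp only [e]
    congr 1 <;> exact integral_congr_ae (ae_of_all _ fun p => by ring)
  have E := tendsto_nhds_unique ((T1.add T2).congr heq) T3
  have mbd : ∀ {g h : ℝ × ℝ → ℝ}, MemLp g 2 volume → MemLp h 2 volume →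
      Integrable (fun p => deriv θ (w p) * (g p * h p)) volume := by
    intro g h hg hh
    refine (L2_mul hg hh).bdd_mul (c := M) ?_ (ae_of_all _ fun p => hda _)
    exact hθc.comp_aestronglyMeasurable d.hw.1
  have L1 : c * (∫ p, deriv θ (w p) * (wx p * wx p)) ≤
      ∫ p, deriv θ (w p) * (A p * wx p * wx p) := by
    rw [← integral_const_mul]
    refine integral_mono ((mbd d.hwx d.hwx).const_mul _) (mbd mx d.hwx) fun p => ?_
    have := mul_le_mul_of_nonneg_right (d.Alow p)
      (mul_nonneg (hd0 (w p)) (mul_self_nonneg (wx p)))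
    simp only; linarith
  have L2 : c * (∫ p, deriv θ (w p) * (wy p * wy p)) ≤
      ∫ p, deriv θ (w p) * (B p * wy p * wy p) := by
    rw [← integral_const_mul]
    refine integral_mono ((mbd d.hwy d.hwy).const_mul _) (mbd my d.hwy) fun p => ?_
    have := mul_le_mul_of_nonneg_right (d.Blow p)
      (mul_nonneg (hd0 (w p)) (mul_self_nonneg (wy p)))
    simp only; linarith
  have L3 : ∫ p, (G p - V p * w p) * θ (w p) ≤ ∫ p, |G p| * Jk k (w p) := by
    refine integral_mono_ae ?_ ?_ ?_
    · refine hR.mul_bdd (c := 1) (hθ.continuous.comp_aestronglyMeasurable d.hw.1)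
        (ae_of_all _ fun p => ?_)
      rw [Real.norm_eq_abs, abs_of_nonneg (h0 _)]; exact h1 _
    · refine d.hGi.abs.mul_bdd (c := 1) ?_ (ae_of_all _ fun p => Jk_abs _ _)
      exact ((Jk_meas k).comp_aemeasurable d.hw.1.aemeasurable).aestronglyMeasurable
    · filter_upwards [d.Vpos] with p hp
      rcases lt_or_ge k (w p) with h | h
      · rw [Jk_of_lt h]
        have a1 : 0 ≤ V p * w p * θ (w p) :=
          mul_nonneg (mul_nonneg hp (hk.trans h.le)) (h0 _)
        have a2 : G p * θ (w p) ≤ |G p| * 1 :=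
          (mul_le_mul_of_nonneg_right (le_abs_self _) (h0 _)).trans
            (mul_le_mul_of_nonneg_left (h1 _) (abs_nonneg _))
        linarith
      · rw [Jk_of_le h, hz0 _ h]; simp
  rw [mul_add]
  linarith

lemma Data.sob (d : Data c A B w wx wy G V z) {Cg : ℝ} (hC0 : 0 ≤ Cg)
    (hCg : ∀ φ : ℝ × ℝ → ℝ, IsTestOn univ φ →
    ∫ p, (φ p) ^ 2 ≤ Cg * (∫ p, (|DD (1, 0) φ p| + |DD (0, 1) φ p|)) ^ 2)
    {θ : ℝ → ℝ} (hθ : ContDiff ℝ (⊤ : ℕ∞) θ)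
    (h0 : ∀ t, 0 ≤ θ t) (h1 : ∀ t, θ t ≤ 1) {k M : ℝ} (hk : 0 ≤ k) (hz0 : ∀ t, t ≤ k → θ t = 0)
    (hd0 : ∀ t, 0 ≤ deriv θ t) (hdM : ∀ t, deriv θ t ≤ M) (hdz : ∀ t, t ≤ k → deriv θ t = 0) :
    ∫ p, (θ (w p)) ^ 2 ≤ Cg * ((∫ p, deriv θ (w p)) *
      (2 * ((∫ p, deriv θ (w p) * (wx p * wx p)) + ∫ p, deriv θ (w p) * (wy p * wy p)))) := by
  have hθc : Continuous (deriv θ) := hθ.continuous_deriv (by simp)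
  have hda : ∀ t, |deriv θ t| ≤ M := fun t => by rw [abs_of_nonneg (hd0 t)]; exact hdM t
  have hbm : ∀ n, AEStronglyMeasurable (fun p => deriv θ (z n p)) volume := fun n =>
    (hθc.comp (d.hz n).continuous).aestronglyMeasurable
  have hbl : ∀ᵐ p, Tendsto (fun n => deriv θ (z n p)) atTop (𝓝 (deriv θ (w p))) := by
    filter_upwards [d.hae] with p hp
    exact (hθc.tendsto _).comp hp
  have T1 := conv3 hbm (fun n p => hda (z n p)) hbl (fun n => ((d.hz n).DD (1, 0)).memLp 2) d.hwx
    (fun n => ((d.hz n).DD (1, 0)).memLp 2) d.hwx d.hzx d.hzx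
  have T2 := conv3 hbm (fun n p => hda (z n p)) hbl (fun n => ((d.hz n).DD (0, 1)).memLp 2) d.hwy
    (fun n => ((d.hz n).DD (0, 1)).memLp 2) d.hwy d.hzy d.hzy
  have T3 := dct_bdd d.hz d.hae hθc hda (hdz 0 hk)
  have T4 := dct_bdd (β := fun t => (θ t) ^ 2) (M := 1) d.hz d.hae (hθ.continuous.pow 2)
    (fun t => by
      rw [abs_of_nonneg (sq_nonneg _)]
      exact pow_le_one₀ (h0 t) (h1 t)) (by simp [hz0 0 hk])
  refine le_of_tendsto_of_tendsto' T4 ((T3.mul ((T1.add T2).const_mul 2)).const_mul Cg) fun n => ?_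
  have ht : IsTestOn univ (fun p => θ (z n p)) :=
    ((d.hz n).comp_zero hθ (hz0 0 hk)).mono (subset_univ _)
  refine (hCg _ ht).trans (mul_le_mul_of_nonneg_left ?_ hC0)
  have e : ∀ v p, DD v (fun p => θ (z n p)) p = deriv θ (z n p) * DD v (z n) p :=
    fun v p => DD_comp (d.hz n).1 hθ v p
  have e2 : ∀ p, |DD (1, 0) (fun p => θ (z n p)) p| + |DD (0, 1) (fun p => θ (z n p)) p| =
      deriv θ (z n p) * (|DD (1, 0) (z n) p| + |DD (0, 1) (z n) p|) := by
    intro p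
    rw [e, e, abs_mul, abs_mul, abs_of_nonneg (hd0 _)]; ring
  simp only [e2]
  have hbc : HasCompactSupport (fun p => deriv θ (z n p)) := (d.hz n).2.1.comp_left (hdz 0 hk)
  have cx := ((d.hz n).DD (1, 0)).continuous
  have cy := ((d.hz n).DD (0, 1)).continuous
  have cb : Continuous (fun p => deriv θ (z n p)) := hθc.comp (d.hz n).continuous
  have ci : ∀ g : ℝ × ℝ → ℝ, Continuous g →
      Integrable (fun p => deriv θ (z n p) * g p) volume := fun g hg =>
    (cb.mul hg).integrable_of_hasCompactSupport hbc.mul_right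
  have ixx : Integrable (fun p => deriv θ (z n p) * (DD (1, 0) (z n) p * DD (1, 0) (z n) p))
      volume := ci _ (cx.mul cx)
  have iyy : Integrable (fun p => deriv θ (z n p) * (DD (0, 1) (z n) p * DD (0, 1) (z n) p))
      volume := ci _ (cy.mul cy)
  refine (CSw (fun p => hd0 _) (cb.integrable_of_hasCompactSupport hbc)
    (ci _ (cx.abs.add cy.abs)) (ci _ ((cx.abs.add cy.abs).pow 2))).trans ?_
  refine mul_le_mul_of_nonneg_left ?_ (integral_nonneg fun p => hd0 _)
  rw [← integral_add ixx iyy, ← integral_const_mul]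
  refine integral_mono (ci _ ((cx.abs.add cy.abs).pow 2))
    ((ixx.add iyy).const_mul 2) fun p => ?_
  simp only [Pi.add_apply]
  have : (|DD (1, 0) (z n) p| + |DD (0, 1) (z n) p|) ^ 2 ≤
      2 * (DD (1, 0) (z n) p * DD (1, 0) (z n) p + DD (0, 1) (z n) p * DD (0, 1) (z n) p) := by
    rw [← abs_mul_abs_self (DD (1, 0) (z n) p), ← abs_mul_abs_self (DD (0, 1) (z n) p)]
    nlinarith [sq_nonneg (|DD (1, 0) (z n) p| - |DD (0, 1) (z n) p|)]
  have := mul_le_mul_of_nonneg_left this (hd0 (z n p))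
  linarith

lemma Data.upper (d : Data c A B w wx wy G V z) : ∃ K, ∀ᵐ p, w p ≤ K := by
  obtain ⟨Cg, hC0, hCg⟩ := GNS
  obtain ⟨M, hM0, hst⟩ := exists_step
  let m : ℝ → ℝ := fun k => ∫ p, Jk k (w p)
  have hJi : ∀ k, 0 ≤ k → Integrable (fun p => Jk k (w p)) volume := fun k hk =>
    integrable_bdd d.hw.1 d.hw0 (Jk_meas k) (Jk_abs k) (Jk_of_le hk)
  have hm0 : ∀ k, 0 ≤ m k := fun k => integral_nonneg fun p => Jk_nonneg _ _
  set S := Real.sqrt (∫ p, (G p) ^ 2) with hS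
  have hGJ : ∀ k, 0 ≤ k → ∫ p, |G p| * Jk k (w p) ≤ S * Real.sqrt (m k) := by
    intro k hk
    have hJ2 : MemLp (fun p => Jk k (w p)) 2 volume := by
      refine (memLp_two_iff_integrable_sq (hJi k hk).1).2 ((hJi k hk).congr ?_)
      refine ae_of_all _ fun p => ?_
      rcases lt_or_ge k (w p) with h | h
      · simp [Jk_of_lt h]
      · simp [Jk_of_le h]
    have := CS d.hG.abs hJ2
    rw [hS, ← Real.sqrt_mul (integral_nonneg fun p => sq_nonneg _)]
    refine Real.le_sqrt_of_sq_le (this.trans (le_of_eq ?_))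
    congr 1
    · simp
    · refine integral_congr_ae (ae_of_all _ fun p => ?_)
      rcases lt_or_ge k (w p) with h | h
      · simp [Jk_of_lt h]
      · simp [Jk_of_le h]
  have hstep : ∀ k l, 0 ≤ k → k < l →
      m l ≤ (Cg * M * 2 * (S / c)) / (l - k) * (m k * Real.sqrt (m k)) := by
    intro k l hk hkl
    obtain ⟨θ, hθ, h0, h1, hz0, hz1, hd0, hdM, hdz⟩ := hst k l hkl
    have hlk : 0 < l - k := by linarith
    have hθc : Continuous (deriv θ) := hθ.continuous_deriv (by simp)
    have E := (d.energy hθ h0 h1 hk hz0 hd0 hdM).trans (hGJ k hk)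
    have F := d.sob hC0 hCg hθ h0 h1 hk hz0 hd0 hdM hdz
    have a1 : m l ≤ ∫ p, (θ (w p)) ^ 2 := by
      refine integral_mono (hJi l (by linarith)) (integrable_bdd (β := fun t => (θ t) ^ 2) (M := 1)
        d.hw.1 d.hw0 (hθ.continuous.pow 2).measurable (fun t => by
          rw [abs_of_nonneg (sq_nonneg _)]
          exact pow_le_one₀ (h0 t) (h1 t)) (by simp [hz0 0 hk])) fun p => ?_
      simp only
      rcases lt_or_ge l (w p) with h | h
      · rw [Jk_of_lt h, hz1 _ h.le]; norm_num
      · rw [Jk_of_le h]; positivity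
    have a2 : ∫ p, deriv θ (w p) ≤ M / (l - k) * m k := by
      rw [← integral_const_mul]
      refine integral_mono (integrable_bdd (M := M / (l - k)) d.hw.1 d.hw0 hθc.measurable
        (fun t => by rw [abs_of_nonneg (hd0 t)]; exact hdM t) (hdz 0 hk))
        ((hJi k hk).const_mul _) fun p => ?_
      simp only
      rcases lt_or_ge k (w p) with h | h
      · rw [Jk_of_lt h, mul_one]; exact hdM _
      · rw [Jk_of_le h, hdz _ h]; simp
    set X := (∫ p, deriv θ (w p) * (wx p * wx p)) + ∫ p, deriv θ (w p) * (wy p * wy p) with hX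
    have hX0 : 0 ≤ X := add_nonneg
      (integral_nonneg fun p => mul_nonneg (hd0 _) (mul_self_nonneg _))
      (integral_nonneg fun p => mul_nonneg (hd0 _) (mul_self_nonneg _))
    have a3 : X ≤ S / c * Real.sqrt (m k) := by
      rw [div_mul_eq_mul_div, le_div_iff₀ d.cpos]; linarith
    calc m l ≤ _ := a1
      _ ≤ _ := F
      _ ≤ Cg * ((M / (l - k) * m k) * (2 * (S / c * Real.sqrt (m k)))) := by
          have b1 : 0 ≤ M / (l - k) * m k := mul_nonneg (by positivity) (hm0 k)
          refine mul_le_mul_of_nonneg_left ?_ hC0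
          exact mul_le_mul a2 (by linarith) (by positivity) b1
      _ = _ := by ring
  have hcp := d.cpos
  have hm1 : m 0 ≤ 1 := by
    have : m 0 ≤ ∫ p, Omega.indicator (fun _ => (1:ℝ)) p := by
      refine integral_mono (hJi 0 le_rfl) (integrable_indicator_Omega 1) fun p => ?_
      by_cases hp : p ∈ Omega
      · simp only [hp, indicator_of_mem]; exact (le_abs_self _).trans (Jk_abs _ _)
      · simp [hp, d.hw0 p hp, Jk_of_le]
    refine this.trans (le_of_eq ?_)
    rw [integral_indicator measurableSet_Omega]
    simp [Measure.real, volume_Omega]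
  have hmono : ∀ k l, 0 ≤ k → k ≤ l → m l ≤ m k := by
    intro k l hk hkl
    refine integral_mono (hJi l (hk.trans hkl)) (hJi k hk) fun p => ?_
    simp only
    rcases lt_or_ge l (w p) with h | h
    · rw [Jk_of_lt h, Jk_of_lt (hkl.trans_lt h)]
    · rw [Jk_of_le h]; exact Jk_nonneg _ _
  obtain ⟨K, hK0, hK⟩ := stampacchia (m := m) (D := Cg * M * 2 * (S / c)) (by positivity) hm0 hm1 hstep hmono
  refine ⟨K, ?_⟩
  have := (integral_eq_zero_iff_of_nonneg (fun p => Jk_nonneg K (w p)) (hJi K hK0)).1 hK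
  filter_upwards [this] with p hp
  by_contra hlt
  rw [Jk_of_lt (not_le.1 hlt)] at hp
  simp at hp

lemma DD_neg (φ : ℝ × ℝ → ℝ) (v p : ℝ × ℝ) : DD v (fun p => - φ p) p = - DD v φ p := by
  simp [DD, fderiv_fun_neg]

lemma Data.neg (d : Data c A B w wx wy G V z) : Data c A B (fun p => - w p) (fun p => - wx p)
    (fun p => - wy p) (fun p => - G p) V (fun n p => - z n p) where
  cpos := d.cpos
  Acont := d.Acont
  Bcont := d.Bcont
  Alow := d.Alow
  Blow := d.Blow
  Abd := d.Abd
  Bbd := d.Bbd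
  hw := d.hw.neg
  hwx := d.hwx.neg
  hwy := d.hwy.neg
  hG := d.hG.neg
  hV := d.hV
  hGi := d.hGi.neg
  Vpos := d.Vpos
  hw0 := fun p hp => by simp [d.hw0 p hp]
  hz := fun n => by
    refine (d.hz n).comp_zero (θ := fun t => - t) contDiff_neg (by simp)
  hae := by
    filter_upwards [d.hae] with p hp
    exact hp.neg
  hzx := by
    refine d.hzx.congr fun n => integral_congr_ae (ae_of_all _ fun p => ?_)
    simp only [DD_neg]; ring
  hzy := by
    refine d.hzy.congr fun n => integral_congr_ae (ae_of_all _ fun p => ?_)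
    simp only [DD_neg]; ring
  eq := by
    intro φ hφ
    have := congrArg (fun t => - t) (d.eq φ hφ)
    simp only [← integral_neg] at this
    refine Eq.trans ?_ (this.trans ?_) <;>
    · refine integral_congr_ae (ae_of_all _ fun p => ?_)
      simp only; ring

lemma Data.bounded (d : Data c A B w wx wy G V z) : ∃ K, ∀ᵐ p, |w p| ≤ K := by
  obtain ⟨K1, h1⟩ := d.upper
  obtain ⟨K2, h2⟩ := d.neg.upper
  refine ⟨max K1 K2, ?_⟩
  filter_upwards [h1, h2] with p a b
  rw [abs_le]
  constructor
  · linarith [le_max_right K1 K2]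
  · exact a.trans (le_max_left _ _)
end


/-- Difference quotient. -/
def DQ (e : ℝ × ℝ) (h : ℝ) (g : ℝ × ℝ → ℝ) (p : ℝ × ℝ) : ℝ := (g (p + h • e) - g p) / h

/-- L2 size. -/
def N2 (g : ℝ × ℝ → ℝ) : ℝ := Real.sqrt (∫ p, (g p) ^ 2)

lemma N2_nonneg (g : ℝ × ℝ → ℝ) : 0 ≤ N2 g := Real.sqrt_nonneg _
lemma N2_sq (g : ℝ × ℝ → ℝ) : (N2 g) ^ 2 = ∫ p, (g p) ^ 2 :=
  Real.sq_sqrt (integral_nonneg fun _ => sq_nonneg _)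

lemma CS2 {f g : ℝ × ℝ → ℝ} (hf : MemLp f 2 volume) (hg : MemLp g 2 volume) :
    |∫ p, f p * g p| ≤ N2 f * N2 g := by
  refine abs_le_of_sq_le_sq ?_ (mul_nonneg (N2_nonneg _) (N2_nonneg _))
  rw [mul_pow, N2_sq, N2_sq]
  exact CS hf hg

lemma memLp_shift {g : ℝ × ℝ → ℝ} {q : ENNReal} (hg : MemLp g q volume) (a : ℝ × ℝ) :
    MemLp (fun p => g (p + a)) q volume :=
  hg.comp_measurePreserving (measurePreserving_add_right volume a)

lemma DQ_memLp {g : ℝ × ℝ → ℝ} {q : ENNReal} (hg : MemLp g q volume) (e : ℝ × ℝ) (h : ℝ) :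
    MemLp (DQ e h g) q volume := by
  have : DQ e h g = fun p => h⁻¹ * ((fun p => g (p + h • e)) - g) p := by
    ext p; simp [DQ]; ring
  rw [this]
  exact ((memLp_shift hg _).sub hg).const_mul _

lemma IsTestOn.shift {φ : ℝ × ℝ → ℝ} (hφ : IsTestOn univ φ) (a : ℝ × ℝ) :
    IsTestOn univ (fun p => φ (p + a)) :=
  ⟨hφ.1.comp (contDiff_id.add contDiff_const),
    hφ.2.1.comp_homeomorph (Homeomorph.addRight a), subset_univ _⟩

lemma DD_shift (φ : ℝ × ℝ → ℝ) (v a p : ℝ × ℝ) :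
    DD v (fun p => φ (p + a)) p = DD v φ (p + a) := by
  simp [DD, fderiv_comp_add_right]

lemma DQ_test {φ : ℝ × ℝ → ℝ} (hφ : IsTestOn univ φ) (e : ℝ × ℝ) (h : ℝ) :
    IsTestOn univ (DQ e h φ) := by
  refine ⟨((hφ.shift (h • e)).1.sub hφ.1).div_const h, ?_, subset_univ _⟩
  have h1 : HasCompactSupport (fun p => φ (p + h • e) - φ p) :=
    (hφ.shift (h • e)).2.1.sub hφ.2.1
  exact h1.comp_left (g := fun t => t / h) (by simp)

lemma DD_DQ {φ : ℝ × ℝ → ℝ} (hφ : IsTestOn univ φ) (e v : ℝ × ℝ) (h : ℝ) :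
    DD v (DQ e h φ) = DQ e h (DD v φ) := by
  ext p
  have h1 := ((hφ.shift (h • e)).1.differentiable (by simp)) p
  have h2 := (hφ.1.differentiable (by simp)) p
  have e1 : DQ e h φ = fun p => (h⁻¹) * ((fun p => φ (p + h • e)) p - φ p) := by
    ext p; simp [DQ]; ring
  have := DD_shift φ v (h • e) p
  unfold DD at *
  rw [e1, fderiv_const_mul (h1.fun_sub h2), fderiv_fun_sub h1 h2]
  simp [this, DQ]; ring

lemma DQ_IBP {f g : ℝ × ℝ → ℝ} (hf : MemLp f 2 volume) (hg : MemLp g 2 volume) (e : ℝ × ℝ) (h : ℝ) :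
    ∫ p, f p * DQ e (-h) g p = - ∫ p, DQ e h f p * g p := by
  have i1 : Integrable (fun p => f p * g (p + -h • e)) volume := L2_mul hf (memLp_shift hg _)
  have i2 : Integrable (fun p => f (p + h • e) * g p) volume := L2_mul (memLp_shift hf _) hg
  have i3 : Integrable (fun p => f p * g p) volume := L2_mul hf hg
  have e1 : ∫ p, f p * DQ e (-h) g p = (-h⁻¹) * ((∫ p, f p * g (p + -h • e)) - ∫ p, f p * g p) := by
    rw [← integral_sub i1 i3, ← integral_const_mul]
    refine integral_congr_ae (ae_of_all _ fun p => ?_)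
    simp [DQ, div_eq_mul_inv, inv_neg]; ring
  have e2 : ∫ p, DQ e h f p * g p = (h⁻¹) * ((∫ p, f (p + h • e) * g p) - ∫ p, f p * g p) := by
    rw [← integral_sub i2 i3, ← integral_const_mul]
    refine integral_congr_ae (ae_of_all _ fun p => ?_)
    simp [DQ]; ring
  have e3 : ∫ p, f (p + h • e) * g p = ∫ p, f p * g (p + -h • e) := by
    rw [← integral_add_right_eq_self (fun p => f p * g (p + -h • e)) (h • e)]
    simp
  rw [e1, e2, e3]; ring

lemma DQ_sq_le {g : ℝ × ℝ → ℝ} (hg : MemLp g 2 volume) (e : ℝ × ℝ) (h : ℝ) :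
    ∫ p, (DQ e h g p) ^ 2 ≤ 4 / h ^ 2 * ∫ p, (g p) ^ 2 := by
  have i1 := (memLp_shift hg (h • e)).integrable_sq
  have i2 := hg.integrable_sq
  have : ∫ p, (DQ e h g p) ^ 2 ≤ ∫ p, 2 / h ^ 2 * ((g (p + h • e)) ^ 2 + (g p) ^ 2) := by
    refine integral_mono (DQ_memLp hg e h).integrable_sq ((i1.add i2).const_mul _) fun p => ?_
    simp only [DQ, div_pow]
    rw [div_mul_eq_mul_div]
    refine div_le_div_of_nonneg_right ?_ (sq_nonneg h)
    nlinarith [sq_nonneg (g (p + h • e) + g p)]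
  refine this.trans (le_of_eq ?_)
  rw [integral_const_mul, integral_add i1 i2,
    integral_add_right_eq_self (fun p => (g p) ^ 2) (h • e)]
  ring

lemma DQ_tendsto {s : ℕ → ℝ × ℝ → ℝ} {s' : ℝ × ℝ → ℝ} (hs : ∀ n, MemLp (s n) 2 volume)
    (hs' : MemLp s' 2 volume) (hsc : Tendsto (fun n => ∫ p, (s n p - s' p) ^ 2) atTop (𝓝 0))
    (e : ℝ × ℝ) (h : ℝ) :
    Tendsto (fun n => ∫ p, (DQ e h (s n) p - DQ e h s' p) ^ 2) atTop (𝓝 0) := by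
  have := hsc.const_mul (4 / h ^ 2)
  rw [mul_zero] at this
  refine squeeze_zero (fun n => integral_nonneg fun _ => sq_nonneg _) (fun n => ?_) this
  refine le_trans (le_of_eq ?_) (DQ_sq_le ((hs n).sub hs') e h)
  refine integral_congr_ae (ae_of_all _ fun p => ?_)
  simp [DQ]; ring

lemma jensen01 {g : ℝ → ℝ} (hg : Continuous g) :
    (∫ t in (0:ℝ)..1, g t) ^ 2 ≤ ∫ t in (0:ℝ)..1, (g t) ^ 2 := by
  set m := ∫ t in (0:ℝ)..1, g t with hm
  have h0 : 0 ≤ ∫ t in (0:ℝ)..1, (g t - m) ^ 2 :=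
    intervalIntegral.integral_nonneg (by norm_num) fun t _ => sq_nonneg _
  have e : ∀ t, (g t - m) ^ 2 = (g t) ^ 2 - (2 * m) * g t + m ^ 2 := fun t => by ring
  simp only [e] at h0
  rw [intervalIntegral.integral_add, intervalIntegral.integral_sub,
    intervalIntegral.integral_const_mul] at h0
  · simp only [intervalIntegral.integral_const, ← hm] at h0
    norm_num at h0
    nlinarith
  all_goals exact (by fun_prop : Continuous _).intervalIntegrable _ _

lemma DQ_bound {φ : ℝ × ℝ → ℝ} (hφ : IsTestOn univ φ) (e : ℝ × ℝ) {h : ℝ} (hh : h ≠ 0) :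
    ∫ p, (DQ e h φ p) ^ 2 ≤ ∫ p, (DD e φ p) ^ 2 := by
  have hc : Continuous (DD e φ) := (hφ.DD e).continuous
  have hD : ∀ p, DQ e h φ p = ∫ t in (0:ℝ)..1, DD e φ (p + (t * h) • e) := by
    intro p
    have hd : ∀ t ∈ uIcc (0:ℝ) 1, HasDerivAt (fun t => φ (p + (t * h) • e) / h)
        (DD e φ (p + (t * h) • e)) t := by
      intro t _
      have h1 := (hφ.1.differentiable (by simp) (p + (t * h) • e)).hasFDerivAt
      have h2 : HasDerivAt (fun t : ℝ => p + (t * h) • e) (h • e) t := by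
        have := (((hasDerivAt_id t).mul_const h).smul_const e).const_add p
        simpa using this
      have h3 := (h1.comp_hasDerivAt t h2).div_const h
      rw [map_smul, smul_eq_mul, mul_div_cancel_left₀ _ hh] at h3
      exact h3
    rw [intervalIntegral.integral_eq_sub_of_hasDerivAt hd
      ((hc.comp (by fun_prop)).intervalIntegrable _ _)]
    simp [DQ, sub_div]
  have key : ∫⁻ p, ENNReal.ofReal ((DQ e h φ p) ^ 2) ≤ ∫⁻ p, ENNReal.ofReal ((DD e φ p) ^ 2) := by
    calc ∫⁻ p, ENNReal.ofReal ((DQ e h φ p) ^ 2)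
        ≤ ∫⁻ p, ∫⁻ t in Ioc (0:ℝ) 1, ENNReal.ofReal ((DD e φ (p + (t * h) • e)) ^ 2) := by
          refine lintegral_mono fun p => ?_
          have hcp : Continuous (fun t : ℝ => DD e φ (p + (t * h) • e)) := hc.comp (by fun_prop)
          have hI : IntegrableOn (fun t => (DD e φ (p + (t * h) • e)) ^ 2) (Ioc 0 1) volume :=
            (hcp.pow 2).integrableOn_Icc.mono_set Ioc_subset_Icc_self
          rw [hD p, ← ofReal_integral_eq_lintegral_ofReal hI
            (ae_of_all _ fun _ => sq_nonneg _), ← intervalIntegral.integral_of_le (by norm_num)]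
          exact ENNReal.ofReal_le_ofReal (jensen01 hcp)
      _ = ∫⁻ t in Ioc (0:ℝ) 1, ∫⁻ p, ENNReal.ofReal ((DD e φ (p + (t * h) • e)) ^ 2) := by
          refine lintegral_lintegral_swap ?_
          refine (Continuous.measurable ?_).aemeasurable
          exact ENNReal.continuous_ofReal.comp ((hc.comp (by fun_prop)).pow 2)
      _ = ∫⁻ t in Ioc (0:ℝ) 1, ∫⁻ p, ENNReal.ofReal ((DD e φ p) ^ 2) := by
          refine lintegral_congr fun t => ?_
          exact lintegral_add_right_eq_self (fun p => ENNReal.ofReal ((DD e φ p) ^ 2)) ((t * h) • e)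
      _ = _ := by simp
  rw [← ofReal_integral_eq_lintegral_ofReal ((DQ_test hφ e h).memLp 2).integrable_sq
      (ae_of_all _ fun _ => sq_nonneg _),
    ← ofReal_integral_eq_lintegral_ofReal ((hφ.DD e).memLp 2).integrable_sq
      (ae_of_all _ fun _ => sq_nonneg _)] at key
  exact (ENNReal.ofReal_le_ofReal_iff (integral_nonneg fun _ => sq_nonneg _)).1 key


lemma weak_limit {X : ℕ → ℝ × ℝ → ℝ} {M : ℝ} (hX : ∀ n, MemLp (X n) 2 volume)
    (hM : ∀ n, ∫ p, (X n p) ^ 2 ≤ M) :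
    ∃ h, MemLp h 2 volume ∧ ∀ g, MemLp g 2 volume → ∀ l,
      Tendsto (fun n => ∫ p, X n p * g p) atTop (𝓝 l) → ∫ p, h p * g p = l := by
  let E := Lp ℝ 2 (volume : Measure (ℝ × ℝ))
  let Y : ℕ → E := fun n => (hX n).toLp
  have inner_eq : ∀ (f g : E), inner ℝ f g = ∫ p, f p * g p := by
    intro f g
    rw [L2.inner_def]
    refine integral_congr_ae (ae_of_all _ fun p => ?_)
    simp; ring
  have hYn : ∀ n, ‖Y n‖ ≤ Real.sqrt M := by
    intro n
    refine Real.le_sqrt_of_sq_le ?_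
    rw [← real_inner_self_eq_norm_sq, inner_eq]
    refine le_trans (le_of_eq ?_) (hM n)
    refine integral_congr_ae ?_
    filter_upwards [(hX n).coeFn_toLp] with p hp
    simp only [Y, hp]; ring
  let T : ℕ → WeakDual ℝ E := fun n => StrongDual.toWeakDual (InnerProductSpace.toDual ℝ E (Y n))
  have hK := WeakDual.isCompact_closedBall (𝕜 := ℝ) (E := E) (0 : StrongDual ℝ E) (Real.sqrt M)
  have hT : ∀ n, T n ∈ WeakDual.toStrongDual ⁻¹' Metric.closedBall (0 : StrongDual ℝ E) (Real.sqrt M) := by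
    intro n
    simp only [mem_preimage, mem_closedBall_zero_iff]
    exact ((InnerProductSpace.toDual ℝ E).norm_map (Y n)).le.trans (hYn n)
  have hU : ((hyperfilter ℕ).map T : Ultrafilter _) ≤
      (𝓟 (WeakDual.toStrongDual ⁻¹' Metric.closedBall (0 : StrongDual ℝ E) (Real.sqrt M)) : Filter (WeakDual ℝ E)) := by
    rw [le_principal_iff]
    exact mem_map.2 (univ_mem' hT)
  obtain ⟨τ, -, hτ⟩ := isCompact_iff_ultrafilter_le_nhds.1 hK _ hU
  let h : E := (InnerProductSpace.toDual ℝ E).symm (WeakDual.toStrongDual τ)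
  refine ⟨h, Lp.memLp h, fun g hg l hl => ?_⟩
  have t1 : Tendsto (fun n => T n hg.toLp) (hyperfilter ℕ) (𝓝 (τ hg.toLp)) :=
    ((WeakDual.eval_continuous hg.toLp).tendsto τ).comp hτ
  have e1 : ∀ n, T n hg.toLp = ∫ p, X n p * g p := by
    intro n
    have : T n hg.toLp = inner ℝ (Y n) hg.toLp := rfl
    rw [this, inner_eq]
    refine integral_congr_ae ?_
    filter_upwards [(hX n).coeFn_toLp, hg.coeFn_toLp] with p hp hp2
    simp only [Y, hp, hp2]
  have e2 : τ hg.toLp = ∫ p, h p * g p := by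
    have : τ hg.toLp = inner ℝ h hg.toLp := by
      simp only [h, InnerProductSpace.toDual_symm_apply]; rfl
    rw [this, inner_eq]
    refine integral_congr_ae ?_
    filter_upwards [hg.coeFn_toLp] with p hp2
    simp only [hp2]
  simp only [e1, e2] at t1
  exact tendsto_nhds_unique t1 (hl.mono_left (Nat.hyperfilter_le_atTop))

section
variable {c : ℝ} {A B w wx wy G V : ℝ × ℝ → ℝ} {z : ℕ → ℝ × ℝ → ℝ}

lemma conv2 {s t : ℕ → ℝ × ℝ → ℝ} {s' t' : ℝ × ℝ → ℝ}
    (hs : ∀ n, MemLp (s n) 2 volume) (hs' : MemLp s' 2 volume)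
    (ht : ∀ n, MemLp (t n) 2 volume) (ht' : MemLp t' 2 volume)
    (hsc : Tendsto (fun n => ∫ p, (s n p - s' p) ^ 2) atTop (𝓝 0))
    (htc : Tendsto (fun n => ∫ p, (t n p - t' p) ^ 2) atTop (𝓝 0)) :
    Tendsto (fun n => ∫ p, s n p * t n p) atTop (𝓝 (∫ p, s' p * t' p)) := by
  have := conv3 (b := fun _ _ => 1) (b' := fun _ => 1) (M := 1)
    (fun _ => aestronglyMeasurable_const) (by simp) (by simp) hs hs' ht ht' hsc htc
  simpa using this

lemma Data.DQ_est (d : Data c A B w wx wy G V z) (hF : MemLp (fun p => G p - V p * w p) 2 volume)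
    {e : ℝ × ℝ} (he : e = (1, 0) ∨ e = (0, 1)) {L : ℝ}
    (hAL : ∀ p h, |A (p + h • e) - A p| ≤ L * |h|) (hBL : ∀ p h, |B (p + h • e) - B p| ≤ L * |h|)
    {h : ℝ} (hh : h ≠ 0) :
    (∫ p, (DQ e h wx p) ^ 2) + (∫ p, (DQ e h wy p) ^ 2) ≤
      ((L * N2 wx + L * N2 wy + N2 (fun p => G p - V p * w p)) / c) ^ 2 := by
  set F := fun p => G p - V p * w p with hFdef
  have hzu : ∀ n, IsTestOn univ (z n) := fun n => (d.hz n).mono (subset_univ _)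
  have mx : MemLp (fun p => A p * wx p) 2 volume := memLp_bdd_mul d.Acont d.Abd d.hwx
  have my : MemLp (fun p => B p * wy p) 2 volume := memLp_bdd_mul d.Bcont d.Bbd d.hwy
  have hXn : ∀ n, MemLp (DQ e h (DD (1, 0) (z n))) 2 volume := fun n =>
    DQ_memLp (((hzu n).DD _).memLp 2) e h
  have hYn : ∀ n, MemLp (DQ e h (DD (0, 1) (z n))) 2 volume := fun n =>
    DQ_memLp (((hzu n).DD _).memLp 2) e h
  have hX := DQ_memLp d.hwx e h
  have hY := DQ_memLp d.hwy e h
  have cX := DQ_tendsto (fun n => ((hzu n).DD (1, 0)).memLp 2) d.hwx d.hzx e h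
  have cY := DQ_tendsto (fun n => ((hzu n).DD (0, 1)).memLp 2) d.hwy d.hzy e h
  have T1 := conv2 (s := fun _ => DQ e h (fun p => A p * wx p)) (fun _ => DQ_memLp mx e h)
    (DQ_memLp mx e h) hXn hX (by simp) cX
  have T2 := conv2 (s := fun _ => DQ e h (fun p => B p * wy p)) (fun _ => DQ_memLp my e h)
    (DQ_memLp my e h) hYn hY (by simp) cY
  have T3 := conv2 hXn hX hXn hX cX cX
  have T4 := conv2 hYn hY hYn hY cY cY
  set S := (∫ p, (DQ e h wx p) ^ 2) + (∫ p, (DQ e h wy p) ^ 2) with hS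
  have T5 : Tendsto (fun n => Real.sqrt ((∫ p, (DQ e h (DD (1, 0) (z n)) p) ^ 2) +
      ∫ p, (DQ e h (DD (0, 1) (z n)) p) ^ 2)) atTop (𝓝 (Real.sqrt S)) := by
    have := T3.add T4
    simp only [← sq] at this
    exact (Real.continuous_sqrt.tendsto _).comp this
  have ineq : ∀ n, (∫ p, DQ e h (fun p => A p * wx p) p * DQ e h (DD (1, 0) (z n)) p) +
      (∫ p, DQ e h (fun p => B p * wy p) p * DQ e h (DD (0, 1) (z n)) p) ≤
      N2 F * Real.sqrt ((∫ p, (DQ e h (DD (1, 0) (z n)) p) ^ 2) +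
      ∫ p, (DQ e h (DD (0, 1) (z n)) p) ^ 2) := by
    intro n
    have t1 := DQ_test (hzu n) e h
    have t2 := DQ_test t1 e (-h)
    have E := d.eq _ t2
    rw [DD_DQ t1, DD_DQ t1, DD_DQ (hzu n), DD_DQ (hzu n),
      integral_add (L2_mul mx (DQ_memLp (hXn n) _ _)) (L2_mul my (DQ_memLp (hYn n) _ _)),
      DQ_IBP mx (hXn n), DQ_IBP my (hYn n)] at E
    have b1 : |∫ p, F p * DQ e (-h) (DQ e h (z n)) p| ≤ _ := CS2 hF (t2.memLp 2)
    have b2 : N2 (DQ e (-h) (DQ e h (z n))) ≤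
        Real.sqrt ((∫ p, (DQ e h (DD (1, 0) (z n)) p) ^ 2) +
      ∫ p, (DQ e h (DD (0, 1) (z n)) p) ^ 2) := by
      refine Real.sqrt_le_sqrt ((DQ_bound t1 e (neg_ne_zero.2 hh)).trans ?_)
      rw [DD_DQ (hzu n)]
      have p1 : 0 ≤ ∫ p, (DQ e h (DD (1, 0) (z n)) p) ^ 2 := integral_nonneg fun _ => sq_nonneg _
      have p2 : 0 ≤ ∫ p, (DQ e h (DD (0, 1) (z n)) p) ^ 2 := integral_nonneg fun _ => sq_nonneg _
      rcases he with rfl | rfl <;> linarith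
    have b3 := mul_le_mul_of_nonneg_left b2 (N2_nonneg F)
    have b4 := (neg_le_abs _).trans (b1.trans b3)
    linarith
  have lim := le_of_tendsto_of_tendsto' (T1.add T2) (T5.const_mul (N2 F)) ineq
  have hS0 : 0 ≤ S := add_nonneg (integral_nonneg fun _ => sq_nonneg _) (integral_nonneg fun _ => sq_nonneg _)
  have nX : N2 (DQ e h wx) ≤ Real.sqrt S := Real.sqrt_le_sqrt (by
    have : 0 ≤ ∫ p, (DQ e h wy p) ^ 2 := integral_nonneg fun _ => sq_nonneg _
    linarith)
  have nY : N2 (DQ e h wy) ≤ Real.sqrt S := Real.sqrt_le_sqrt (by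
    have : 0 ≤ ∫ p, (DQ e h wx p) ^ 2 := integral_nonneg fun _ => sq_nonneg _
    linarith)
  have hL : 0 ≤ L := by
    have := (abs_nonneg _).trans (hAL 0 1)
    simpa using this
  have low : ∀ {A g : ℝ × ℝ → ℝ}, Continuous A → (∃ C, ∀ p, |A p| ≤ C) → (∀ p, c ≤ A p) →
      (∀ p h, |A (p + h • e) - A p| ≤ L * |h|) → MemLp g 2 volume → N2 (DQ e h g) ≤ Real.sqrt S →
      c * (∫ p, (DQ e h g p) ^ 2) ≤ (∫ p, DQ e h (fun p => A p * g p) p * DQ e h g p) +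
        L * N2 g * Real.sqrt S := by
    intro A g hA hAb hAc hAL hg hgS
    have hgA := memLp_bdd_mul hA hAb hg
    have hD := DQ_memLp hg e h
    have hAs : MemLp (fun p => A (p + h • e) * DQ e h g p) 2 volume := by
      obtain ⟨C, hC⟩ := hAb
      exact memLp_bdd_mul (A := fun p => A (p + h • e)) (hA.comp (by fun_prop)) ⟨C, fun p => hC _⟩ hD
    have hAd : ∀ p, |DQ e h A p| ≤ L := fun p => by
      simp only [DQ]
      rw [abs_div, div_le_iff₀ (abs_pos.2 hh)]; exact hAL p h
    have hAD : MemLp (fun p => DQ e h A p * g p) 2 volume := by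
      refine memLp_bdd_mul (A := DQ e h A) ?_ ⟨L, hAd⟩ hg
      unfold DQ
      exact ((hA.comp (by fun_prop)).sub hA).div_const _
    have split : ∀ p, DQ e h (fun p => A p * g p) p = A (p + h • e) * DQ e h g p + DQ e h A p * g p := by
      intro p; simp only [DQ]; ring
    have I1 : ∫ p, DQ e h (fun p => A p * g p) p * DQ e h g p =
        (∫ p, (A (p + h • e) * DQ e h g p) * DQ e h g p) + ∫ p, (DQ e h A p * g p) * DQ e h g p := by
      rw [← integral_add (L2_mul hAs hD) (L2_mul hAD hD)]
      refine integral_congr_ae (ae_of_all _ fun p => ?_)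
      simp only [split]; ring
    have I2 : c * (∫ p, (DQ e h g p) ^ 2) ≤ ∫ p, (A (p + h • e) * DQ e h g p) * DQ e h g p := by
      rw [← integral_const_mul]
      refine integral_mono (hD.integrable_sq.const_mul _) (L2_mul hAs hD) fun p => ?_
      simp only
      rw [mul_assoc, ← sq]
      exact mul_le_mul_of_nonneg_right (hAc _) (sq_nonneg _)
    have I3 : N2 (fun p => DQ e h A p * g p) ≤ L * N2 g := by
      unfold N2
      rw [← Real.sqrt_sq hL, ← Real.sqrt_mul (sq_nonneg _)]
      refine Real.sqrt_le_sqrt ?_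
      rw [← integral_const_mul]
      refine integral_mono hAD.integrable_sq (hg.integrable_sq.const_mul _) fun p => ?_
      simp only [mul_pow]
      refine mul_le_mul_of_nonneg_right ?_ (sq_nonneg _)
      rw [← sq_abs]; exact pow_le_pow_left₀ (abs_nonneg _) (hAd p) 2
    have I4 := CS2 hAD hD
    have I5 : N2 (fun p => DQ e h A p * g p) * N2 (DQ e h g) ≤ L * N2 g * Real.sqrt S :=
      mul_le_mul I3 hgS (N2_nonneg _) (mul_nonneg hL (N2_nonneg _))
    have I6 := (neg_le_abs _).trans (I4.trans I5)
    linarith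
  have lx := low d.Acont d.Abd d.Alow hAL d.hwx nX
  have ly := low d.Bcont d.Bbd d.Blow hBL d.hwy nY
  have fin : c * S ≤ (L * N2 wx + L * N2 wy + N2 F) * Real.sqrt S := by
    rw [hS, mul_add]; rw [← hS]; nlinarith
  have hR : 0 ≤ L * N2 wx + L * N2 wy + N2 F :=
    add_nonneg (add_nonneg (mul_nonneg hL (N2_nonneg _)) (mul_nonneg hL (N2_nonneg _))) (N2_nonneg _)
  have hsq := Real.sq_sqrt hS0
  have hc := d.cpos
  have : Real.sqrt S ≤ (L * N2 wx + L * N2 wy + N2 F) / c := by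
    rw [le_div_iff₀ hc]
    rcases (Real.sqrt_nonneg S).eq_or_lt with h0 | h0
    · rw [← h0]; simpa using hR
    · refine le_of_mul_le_mul_right ?_ h0
      nlinarith
  rw [← hsq]
  exact pow_le_pow_left₀ (Real.sqrt_nonneg _) this 2

lemma DQ_lim {g : ℝ × ℝ → ℝ} {e : ℝ × ℝ} {M : ℝ} (hg : MemLp g 2 volume) (hgi : Integrable g volume)
    (hM : ∀ h : ℝ, h ≠ 0 → ∫ p, (DQ e h g p) ^ 2 ≤ M) :
    ∃ k, MemLp k 2 volume ∧ ∀ φ, IsTestOn univ φ → ∫ p, g p * DD e φ p = - ∫ p, k p * φ p := by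
  let t : ℕ → ℝ := fun n => 1 / ((n : ℝ) + 1)
  have ht0 : ∀ n, t n ≠ 0 := fun n => by positivity
  have htl : Tendsto t atTop (𝓝 0) := tendsto_one_div_add_atTop_nhds_zero_nat
  obtain ⟨k, hk, hk2⟩ := weak_limit (X := fun n => DQ e (t n) g) (fun n => DQ_memLp hg _ _)
    (fun n => hM _ (ht0 n))
  refine ⟨k, hk, fun φ hφ => ?_⟩
  have := hk2 φ (hφ.memLp 2) (- ∫ p, g p * DD e φ p) ?_
  · rw [this]; simp
  have e1 : ∀ n, ∫ p, DQ e (t n) g p * φ p = - ∫ p, g p * DQ e (- t n) φ p := by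
    intro n; rw [DQ_IBP hg (hφ.memLp 2)]; simp
  simp only [e1]
  refine Tendsto.neg ?_
  obtain ⟨C, hC⟩ := (hφ.DD e).bdd
  have hder : ∀ p s, HasDerivAt (fun s : ℝ => φ (p + s • e)) (DD e φ (p + s • e)) s := by
    intro p s
    have h1 := (hφ.1.differentiable (by simp) (p + s • e)).hasFDerivAt
    have h2 : HasDerivAt (fun s : ℝ => p + s • e) e s := by
      have := ((hasDerivAt_id s).smul_const e).const_add p
      simpa using this
    exact h1.comp_hasDerivAt s h2
  refine tendsto_integral_of_dominated_convergence (fun p => C * |g p|) ?_ (hgi.abs.const_mul C) ?_ ?_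
  · intro n; exact hgi.1.mul (DQ_test hφ e _).continuous.aestronglyMeasurable
  · intro n; refine ae_of_all _ fun p => ?_
    rw [norm_mul, mul_comm]
    refine mul_le_mul_of_nonneg_right ?_ (norm_nonneg _)
    have := Convex.norm_image_sub_le_of_norm_hasDerivWithin_le (C := C) (s := univ)
      (fun s _ => (hder p s).hasDerivWithinAt) (fun s _ => hC _) convex_univ (mem_univ 0) (mem_univ (- t n))
    simp only [DQ]
    rw [norm_div, div_le_iff₀ (norm_pos_iff.2 (neg_ne_zero.2 (ht0 n)))]
    simpa using this
  · refine ae_of_all _ fun p => ?_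
    refine Tendsto.const_mul _ ?_
    have h1 := (hder p 0).tendsto_slope_zero
    have h2 : Tendsto (fun n => - t n) atTop (𝓝[≠] 0) := by
      refine tendsto_nhdsWithin_iff.2 ⟨by simpa using htl.neg, Eventually.of_forall fun n => ?_⟩
      exact neg_ne_zero.2 (ht0 n)
    have := h1.comp h2
    simp only [zero_smul, add_zero] at this
    refine this.congr fun n => ?_
    simp [DQ, div_eq_mul_inv]; ring
end


/-- Mollification. -/
def Mol (w ρ : ℝ × ℝ → ℝ) : ℝ × ℝ → ℝ :=
  MeasureTheory.convolution w ρ (ContinuousLinearMap.lsmul ℝ ℝ) volume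

lemma Mol_apply (w ρ : ℝ × ℝ → ℝ) (p : ℝ × ℝ) : Mol w ρ p = ∫ t, w t * ρ (p - t) := rfl

lemma Mol_contDiff {w ρ : ℝ × ℝ → ℝ} (hw : Integrable w volume) (hρ : IsTestOn univ ρ) :
    ContDiff ℝ (⊤ : ℕ∞) (Mol w ρ) :=
  hρ.2.1.contDiff_convolution_right _ hw.locallyIntegrable hρ.1

lemma Mol_DD {w ρ : ℝ × ℝ → ℝ} (hw : Integrable w volume) (hρ : IsTestOn univ ρ) (v : ℝ × ℝ) :
    DD v (Mol w ρ) = Mol w (DD v ρ) := by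
  ext p
  have h1 : ContDiff ℝ 1 ρ := hρ.1.of_le (by exact_mod_cast le_top)
  have := (hρ.2.1.hasFDerivAt_convolution_right (ContinuousLinearMap.lsmul ℝ ℝ)
    hw.locallyIntegrable h1 p).fderiv
  show fderiv ℝ (Mol w ρ) p v = _
  unfold Mol
  rw [this, convolution_precompR_apply _ hw.locallyIntegrable (hρ.2.1.fderiv ℝ)
    (h1.continuous_fderiv (by simp))]
  rfl

lemma IsTestOn.refl {ρ : ℝ × ℝ → ℝ} (hρ : IsTestOn univ ρ) (p : ℝ × ℝ) :
    IsTestOn univ (fun t => ρ (p - t)) :=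
  ⟨hρ.1.comp (contDiff_const.sub contDiff_id),
    hρ.2.1.comp_homeomorph (Homeomorph.subLeft p), subset_univ _⟩

lemma DD_refl {ρ : ℝ × ℝ → ℝ} (hρ : ContDiff ℝ (⊤ : ℕ∞) ρ) (v p t : ℝ × ℝ) :
    DD v (fun t => ρ (p - t)) t = - DD v ρ (p - t) := by
  have h1 := (hρ.differentiable (by simp) (p - t)).hasFDerivAt
  have h2 := h1.comp t ((hasFDerivAt_id t).const_sub p)
  show fderiv ℝ (ρ ∘ fun t => p - t) t v = _
  rw [show fderiv ℝ (ρ ∘ fun t => p - t) t = _ from h2.fderiv]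
  simp [DD]

lemma rect {W : ℝ × ℝ → ℝ} (hW : ContDiff ℝ (⊤ : ℕ∞) W) {x x' a y : ℝ} (hx : x ≤ x') (hy : a ≤ y) :
    (W (x', y) - W (x, y)) - (W (x', a) - W (x, a)) =
      ∫ p in Ioc x x' ×ˢ Ioc a y, DD (1, 0) (DD (0, 1) W) p := by
  have hD := DD_contDiff hW (0, 1)
  have hM := DD_contDiff hD (1, 0)
  have dx : ∀ {U : ℝ × ℝ → ℝ}, ContDiff ℝ (⊤ : ℕ∞) U → ∀ s τ : ℝ,
      HasDerivAt (fun s => U (s, τ)) (DD (1, 0) U (s, τ)) s := by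
    intro U hU s τ
    have h1 := (hU.differentiable (by simp) (s, τ)).hasFDerivAt
    exact h1.comp_hasDerivAt s ((hasDerivAt_id s).prodMk (hasDerivAt_const s τ))
  have dy : ∀ {U : ℝ × ℝ → ℝ}, ContDiff ℝ (⊤ : ℕ∞) U → ∀ s τ : ℝ,
      HasDerivAt (fun τ => U (s, τ)) (DD (0, 1) U (s, τ)) τ := by
    intro U hU s τ
    have h1 := (hU.differentiable (by simp) (s, τ)).hasFDerivAt
    exact h1.comp_hasDerivAt τ ((hasDerivAt_const τ s).prodMk (hasDerivAt_id τ))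
  have e1 : ∀ τ, ∫ s in x..x', DD (1, 0) (DD (0, 1) W) (s, τ) =
      DD (0, 1) W (x', τ) - DD (0, 1) W (x, τ) := fun τ =>
    intervalIntegral.integral_eq_sub_of_hasDerivAt (fun s _ => dx hD s τ)
      ((hM.continuous.comp (by fun_prop)).intervalIntegrable _ _)
  have e2 : ∫ τ in a..y, (DD (0, 1) W (x', τ) - DD (0, 1) W (x, τ)) =
      (W (x', y) - W (x, y)) - (W (x', a) - W (x, a)) :=
    intervalIntegral.integral_eq_sub_of_hasDerivAt (fun τ _ => (dy hW x' τ).sub (dy hW x τ))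
      (((hD.continuous.comp (by fun_prop)).sub (hD.continuous.comp (by fun_prop))).intervalIntegrable _ _)
  rw [← e2]
  simp only [← e1]
  have hI : IntegrableOn (DD (1, 0) (DD (0, 1) W)) (Ioc x x' ×ˢ Ioc a y) (volume.prod volume) :=
    (hM.continuous.continuousOn.integrableOn_compact (isCompact_Icc.prod isCompact_Icc)).mono_set
      (prod_mono Ioc_subset_Icc_self Ioc_subset_Icc_self)
  rw [Measure.volume_eq_prod, setIntegral_prod _ hI]
  simp only [intervalIntegral.integral_of_le hx, intervalIntegral.integral_of_le hy]
  rw [integral_integral_swap]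
  have hI2 : Integrable (DD (1, 0) (DD (0, 1) W)) ((volume.restrict (Ioc x x')).prod (volume.restrict (Ioc a y))) := by
    rw [Measure.prod_restrict]; exact hI
  exact hI2.swap

lemma rect_sq {W : ℝ × ℝ → ℝ} (hW : ContDiff ℝ (⊤ : ℕ∞) W) {x x' a y N : ℝ} (hx : x ≤ x') (hy : a ≤ y)
    (hi : Integrable (fun p => (DD (1, 0) (DD (0, 1) W) p) ^ 2) volume)
    (hN : ∫ p, (DD (1, 0) (DD (0, 1) W) p) ^ 2 ≤ N) :
    ((W (x', y) - W (x, y)) - (W (x', a) - W (x, a))) ^ 2 ≤ N * ((x' - x) * (y - a)) := by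
  rw [rect hW hx hy]
  have hv : (volume : Measure (ℝ × ℝ)) (Ioc x x' ×ˢ Ioc a y) = ENNReal.ofReal ((x' - x) * (y - a)) := by
    rw [Measure.volume_eq_prod, Measure.prod_prod, Real.volume_Ioc, Real.volume_Ioc,
      ENNReal.ofReal_mul (by linarith)]
  have hfin : IsFiniteMeasure ((volume : Measure (ℝ × ℝ)).restrict (Ioc x x' ×ˢ Ioc a y)) :=
    ⟨by rw [Measure.restrict_apply_univ, hv]; exact ENNReal.ofReal_lt_top⟩
  have hM := (DD_contDiff (DD_contDiff hW (0, 1)) (1, 0)).continuous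
  have := CS (μ := volume.restrict (Ioc x x' ×ˢ Ioc a y)) (g := fun _ => 1)
    ((memLp_two_iff_integrable_sq hM.aestronglyMeasurable).2 hi.integrableOn) (memLp_const 1)
  simp only [mul_one, one_pow, integral_const, Measure.real, Measure.restrict_apply_univ, hv,
    smul_eq_mul] at this
  rw [ENNReal.toReal_ofReal (mul_nonneg (by linarith) (by linarith))] at this
  refine this.trans (mul_le_mul_of_nonneg_right ?_ (mul_nonneg (by linarith) (by linarith)))
  exact (setIntegral_le_integral hi (ae_of_all _ fun _ => sq_nonneg _)).trans hN

lemma holder_rep {w k : ℝ × ℝ → ℝ} {K : ℝ} (hw : Integrable w volume) (hk : MemLp k 2 volume)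
    (hK : ∀ᵐ p, |w p| ≤ K) (hw0 : ∀ p, p ∉ Omega → w p = 0)
    (hwk : ∀ φ, IsTestOn univ φ → ∫ p, w p * DD (1, 0) (DD (0, 1) φ) p = ∫ p, k p * φ p) :
    ∃ (C : NNReal) (W : ℝ × ℝ → ℝ), (∀ᵐ p, W p = w p) ∧ HolderOnWith C (1 / 2) W Omega := by
  let t : ℕ → ℝ := fun n => 1 / ((n : ℝ) + 1)
  have ht0 : ∀ n, 0 < t n := fun n => by positivity
  have ht1 : ∀ n, t n ≤ 1 := fun n => by
    simp only [t]; rw [div_le_one (by positivity)]; linarith [(Nat.cast_nonneg n : (0:ℝ) ≤ n)]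
  have htl : Tendsto t atTop (𝓝 0) := tendsto_one_div_add_atTop_nhds_zero_nat
  let β : ℕ → ContDiffBump (0 : ℝ × ℝ) := fun n => ⟨t n / 2, t n, half_pos (ht0 n), half_lt_self (ht0 n)⟩
  let ρ : ℕ → ℝ × ℝ → ℝ := fun n => (β n).normed volume
  have hρ : ∀ n, IsTestOn univ (ρ n) := fun n =>
    ⟨(β n).contDiff_normed, (β n).hasCompactSupport_normed, subset_univ _⟩
  have hρ0 : ∀ n p, 0 ≤ ρ n p := fun n p => (β n).nonneg_normed p
  have hρ1 : ∀ n, ∫ p, ρ n p = 1 := fun n => (β n).integral_normed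
  have hρs : ∀ n p, 1 ≤ ‖p‖ → ρ n p = 0 := by
    intro n p hp
    by_contra hne
    have : p ∈ Function.support ((β n).normed volume) := hne
    rw [(β n).support_normed_eq] at this
    rw [mem_ball_zero_iff] at this
    exact absurd (this.trans_le (ht1 n)) (not_lt.2 hp)
  have hae : ∀ᵐ p, Tendsto (fun n => Mol w (ρ n) p) atTop (𝓝 (w p)) := by
    have := ContDiffBump.ae_convolution_tendsto_right_of_locallyIntegrable (μ := volume) (φ := β)
      (l := atTop) (K := 2) htl (Eventually.of_forall fun n => by simp [β]; linarith) hw.locallyIntegrable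
    filter_upwards [this] with p hp
    refine hp.congr fun n => ?_
    rw [convolution_lsmul_swap, Mol_apply]
    refine integral_congr_ae (ae_of_all _ fun q => ?_)
    simp [ρ, mul_comm]
  have hK0 : 0 ≤ K := by
    obtain ⟨p, hp⟩ := hK.exists
    exact (abs_nonneg _).trans hp
  have hbd : ∀ n p, Mol w (ρ n) p ∈ Icc (-K) K := by
    intro n p
    rw [mem_Icc, ← abs_le, Mol_apply]
    calc |∫ q, w q * ρ n (p - q)| ≤ ∫ q, K * ρ n (p - q) := by
          rw [← Real.norm_eq_abs]
          refine norm_integral_le_of_norm_le (((hρ n).refl p).integrable.const_mul K) ?_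
          filter_upwards [hK] with q hq
          rw [norm_mul, Real.norm_eq_abs, Real.norm_eq_abs, abs_of_nonneg (hρ0 n _)]
          exact mul_le_mul_of_nonneg_right hq (hρ0 n _)
      _ = K := by
          rw [integral_const_mul, integral_sub_left_eq_self (fun q => ρ n q) volume p, hρ1, mul_one]
  have hvan : ∀ n p, (p.1 = -1 ∨ p.2 = -1) → Mol w (ρ n) p = 0 := by
    intro n p hp
    rw [Mol_apply]
    refine integral_eq_zero_of_ae (ae_of_all _ fun q => ?_)
    by_cases hq : q ∈ Omega
    · have : ρ n (p - q) = 0 := by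
        refine hρs n _ ?_
        obtain ⟨⟨h1, h2⟩, h3, h4⟩ := hq
        rw [Prod.norm_def, le_max_iff]
        rcases hp with h | h
        · left; rw [Prod.fst_sub, h, Real.norm_eq_abs, abs_sub_comm]; exact le_trans (by linarith) (le_abs_self _)
        · right; rw [Prod.snd_sub, h, Real.norm_eq_abs, abs_sub_comm]; exact le_trans (by linarith) (le_abs_self _)
      simp [this]
    · simp [hw0 q hq]
  have hM : ∀ n, DD (1, 0) (DD (0, 1) (Mol w (ρ n))) = Mol k (ρ n) := by
    intro n
    rw [Mol_DD hw (hρ n), Mol_DD hw ((hρ n).DD _)]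
    ext p
    rw [Mol_apply, Mol_apply, ← hwk _ ((hρ n).refl p)]
    refine integral_congr_ae (ae_of_all _ fun q => ?_)
    have e1 : DD (0, 1) (fun t => ρ n (p - t)) = fun t => - DD (0, 1) (ρ n) (p - t) := by
      ext s; exact DD_refl (hρ n).1 _ _ _
    simp only
    rw [e1, DD_neg, DD_refl ((hρ n).DD _).1, neg_neg]
  have hk2 := hk.integrable_sq
  have hconv : ∀ n, Integrable (Mol (fun p => (k p) ^ 2) (ρ n)) volume := fun n =>
    hk2.integrable_convolution _ (hρ n).integrable
  have hpt : ∀ n p, (Mol k (ρ n) p) ^ 2 ≤ Mol (fun p => (k p) ^ 2) (ρ n) p := by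
    intro n p
    have i1 : Integrable (fun q => ρ n (p - q) * k q) volume := L2_mul (((hρ n).refl p).memLp 2) hk
    have i2 : Integrable (fun q => ρ n (p - q) * (k q) ^ 2) volume := by
      obtain ⟨C, hC⟩ := ((hρ n).refl p).bdd
      exact hk2.bdd_mul (c := C) ((hρ n).refl p).continuous.aestronglyMeasurable (ae_of_all _ hC)
    have := CSw (fun q => hρ0 n (p - q)) ((hρ n).refl p).integrable i1 i2
    rw [integral_sub_left_eq_self (fun q => ρ n q) volume p, hρ1, one_mul] at this
    simpa only [Mol_apply, mul_comm] using this
  have hMc : ∀ n, Continuous (Mol k (ρ n)) := fun n => by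
    rw [← hM n]
    exact (DD_contDiff (DD_contDiff (Mol_contDiff hw (hρ n)) _) _).continuous
  have hint : ∀ n, Integrable (fun p => (Mol k (ρ n) p) ^ 2) volume := fun n =>
    (hconv n).mono' ((hMc n).pow 2).aestronglyMeasurable (ae_of_all _ fun p => by
      rw [Real.norm_eq_abs, abs_of_nonneg (sq_nonneg _)]; exact hpt n p)
  set N := ∫ p, (k p) ^ 2 with hN
  have hN0 : 0 ≤ N := integral_nonneg fun _ => sq_nonneg _
  have hle : ∀ n, ∫ p, (Mol k (ρ n) p) ^ 2 ≤ N := fun n => by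
    refine (integral_mono (hint n) (hconv n) (hpt n)).trans (le_of_eq ?_)
    unfold Mol
    rw [integral_convolution _ hk2 (hρ n).integrable, hρ1]
    simp [hN]
  have hrect : ∀ n {x x' a y : ℝ}, x ≤ x' → a ≤ y →
      ((Mol w (ρ n) (x', y) - Mol w (ρ n) (x, y)) - (Mol w (ρ n) (x', a) - Mol w (ρ n) (x, a))) ^ 2
        ≤ N * ((x' - x) * (y - a)) := fun n x x' a y hx hy =>
    rect_sq (Mol_contDiff hw (hρ n)) hx hy (by rw [hM]; exact hint n) (by rw [hM]; exact hle n)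
  have H1 : ∀ n {x x' y : ℝ}, x ≤ x' → y ∈ Ioo (0:ℝ) 1 →
      |Mol w (ρ n) (x', y) - Mol w (ρ n) (x, y)| ≤ Real.sqrt (2 * N) * Real.sqrt (x' - x) := by
    intro n x x' y hx hy
    have := hrect n hx (show (-1:ℝ) ≤ y by linarith [hy.1])
    rw [hvan n (x', -1) (Or.inr rfl), hvan n (x, -1) (Or.inr rfl), sub_zero, sub_zero] at this
    rw [← Real.sqrt_mul (by linarith)]
    refine Real.abs_le_sqrt (this.trans ?_)
    have h1 : (x' - x) * (y - -1) ≤ (x' - x) * 2 :=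
      mul_le_mul_of_nonneg_left (by linarith [hy.2]) (by linarith)
    nlinarith
  have H2 : ∀ n {x y y' : ℝ}, y ≤ y' → x ∈ Ioo (0:ℝ) 1 →
      |Mol w (ρ n) (x, y') - Mol w (ρ n) (x, y)| ≤ Real.sqrt (2 * N) * Real.sqrt (y' - y) := by
    intro n x y y' hy hx
    have := hrect n (show (-1:ℝ) ≤ x by linarith [hx.1]) hy
    rw [hvan n (-1, y) (Or.inl rfl), hvan n (-1, y') (Or.inl rfl), sub_zero, sub_zero] at this
    rw [← Real.sqrt_mul (by linarith)]
    refine Real.abs_le_sqrt (this.trans ?_)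
    have h1 : (x - -1) * (y' - y) ≤ 2 * (y' - y) :=
      mul_le_mul_of_nonneg_right (by linarith [hx.2]) (by linarith)
    nlinarith
  have H3 : ∀ n p q, p ∈ Omega → q ∈ Omega →
      |Mol w (ρ n) p - Mol w (ρ n) q| ≤ 2 * Real.sqrt (2 * N) * Real.sqrt (dist p q) := by
    rintro n ⟨x, y⟩ ⟨x', y'⟩ ⟨hx, hy⟩ ⟨hx', hy'⟩
    simp only at hx hy hx' hy'
    have s0 := Real.sqrt_nonneg (2 * N)
    have a1 : |Mol w (ρ n) (x, y) - Mol w (ρ n) (x', y)| ≤ Real.sqrt (2 * N) * Real.sqrt (dist x x') := by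
      rw [Real.dist_eq]
      rcases le_total x x' with h | h
      · rw [abs_sub_comm, abs_sub_comm x, abs_of_nonneg (sub_nonneg.2 h)]; exact H1 n h hy
      · rw [abs_of_nonneg (sub_nonneg.2 h)]; exact H1 n h hy
    have a2 : |Mol w (ρ n) (x', y) - Mol w (ρ n) (x', y')| ≤ Real.sqrt (2 * N) * Real.sqrt (dist y y') := by
      rw [Real.dist_eq]
      rcases le_total y y' with h | h
      · rw [abs_sub_comm, abs_sub_comm y, abs_of_nonneg (sub_nonneg.2 h)]; exact H2 n h hx'
      · rw [abs_of_nonneg (sub_nonneg.2 h)]; exact H2 n h hx'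
    have b1 : Real.sqrt (dist x x') ≤ Real.sqrt (dist (x, y) (x', y')) :=
      Real.sqrt_le_sqrt (le_max_left _ _)
    have b2 : Real.sqrt (dist y y') ≤ Real.sqrt (dist (x, y) (x', y')) :=
      Real.sqrt_le_sqrt (le_max_right _ _)
    have := abs_sub_le (Mol w (ρ n) (x, y)) (Mol w (ρ n) (x', y)) (Mol w (ρ n) (x', y'))
    nlinarith
  have hlim : ∀ p, ∃ l, Tendsto (fun n => Mol w (ρ n) p) (hyperfilter ℕ) (𝓝 l) := by
    intro p
    have hU : ((hyperfilter ℕ).map (fun n => Mol w (ρ n) p) : Ultrafilter ℝ) ≤ 𝓟 (Icc (-K) K) := by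
      rw [le_principal_iff]
      exact mem_map.2 (univ_mem' fun n => hbd n p)
    obtain ⟨l, -, hl⟩ := isCompact_iff_ultrafilter_le_nhds.1 (isCompact_Icc (a := -K) (b := K)) _ hU
    exact ⟨l, hl⟩
  choose W hW using hlim
  refine ⟨Real.toNNReal (2 * Real.sqrt (2 * N)), W, ?_, ?_⟩
  · filter_upwards [hae] with p hp
    exact tendsto_nhds_unique (hW p) (hp.mono_left Nat.hyperfilter_le_atTop)
  · intro p hp q hq
    have : dist (W p) (W q) ≤ 2 * Real.sqrt (2 * N) * Real.sqrt (dist p q) := by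
      rw [Real.dist_eq]
      exact le_of_tendsto ((hW p).sub (hW q)).abs (Eventually.of_forall fun n => H3 n p q hp hq)
    rw [edist_dist, edist_dist, ENNReal.ofReal_rpow_of_nonneg dist_nonneg (by positivity),
      show ((Real.toNNReal (2 * Real.sqrt (2 * N)) : NNReal) : ENNReal) = ENNReal.ofReal (2 * Real.sqrt (2 * N)) from rfl, ← ENNReal.ofReal_mul (by positivity)]
    refine ENNReal.ofReal_le_ofReal (this.trans (le_of_eq ?_))
    rw [Real.sqrt_eq_rpow (dist p q)]
    simp


lemma integrable_of_L2 {g : ℝ × ℝ → ℝ} (hg : MemLp g 2 volume) (h0 : ∀ p, p ∉ Omega → g p = 0) :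
    Integrable g volume := by
  have : Integrable (fun p => Omega.indicator (fun _ => (1:ℝ)) p * g p) volume := by
    refine L2_mul ?_ hg
    exact memLp_indicator_const 2 measurableSet_Omega 1 (Or.inr (by rw [volume_Omega]; simp))
  refine this.congr (ae_of_all _ fun p => ?_)
  by_cases hp : p ∈ Omega
  · simp [hp]
  · simp [hp, h0 p hp]

section
variable {c : ℝ} {A B w wx wy G V : ℝ × ℝ → ℝ} {z : ℕ → ℝ × ℝ → ℝ}

lemma Data.regular (d : Data c A B w wx wy G V z) {L : ℝ}
    (hAL : ∀ p q, |A p - A q| ≤ L * ‖p - q‖) (hBL : ∀ p q, |B p - B q| ≤ L * ‖p - q‖)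
    (hwx0 : ∀ p, p ∉ Omega → wx p = 0) (hwy0 : ∀ p, p ∉ Omega → wy p = 0)
    (hwk : ∀ φ, IsTestOn univ φ → ∫ p, w p * DD (1, 0) φ p = - ∫ p, wx p * φ p) :
    (∃ h₁₁ h₁₂ h₂₁ h₂₂ : ℝ × ℝ → ℝ, MemLp h₁₁ 2 volume ∧ MemLp h₁₂ 2 volume ∧
      MemLp h₂₁ 2 volume ∧ MemLp h₂₂ 2 volume ∧
      (∀ φ, IsTestOn univ φ → ∫ p, wx p * DD (1, 0) φ p = - ∫ p, h₁₁ p * φ p) ∧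
      (∀ φ, IsTestOn univ φ → ∫ p, wx p * DD (0, 1) φ p = - ∫ p, h₁₂ p * φ p) ∧
      (∀ φ, IsTestOn univ φ → ∫ p, wy p * DD (1, 0) φ p = - ∫ p, h₂₁ p * φ p) ∧
      (∀ φ, IsTestOn univ φ → ∫ p, wy p * DD (0, 1) φ p = - ∫ p, h₂₂ p * φ p)) ∧
    (∃ (C : NNReal) (W : ℝ × ℝ → ℝ), (∀ᵐ p, W p = w p) ∧ HolderOnWith C (1 / 2) W Omega) := by
  obtain ⟨K, hK⟩ := d.bounded
  have hF : MemLp (fun p => G p - V p * w p) 2 volume := by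
    refine d.hG.sub ?_
    refine MemLp.of_le_mul (c := K) d.hV (d.hV.1.mul d.hw.1) ?_
    filter_upwards [hK] with p hp
    rw [norm_mul, mul_comm]
    exact mul_le_mul_of_nonneg_right hp (norm_nonneg _)
  have est : ∀ e : ℝ × ℝ, (e = (1, 0) ∨ e = (0, 1)) → ∃ M, ∀ h : ℝ, h ≠ 0 →
      ∫ p, (DQ e h wx p) ^ 2 ≤ M ∧ ∫ p, (DQ e h wy p) ^ 2 ≤ M := by
    intro e he
    have hn : ‖e‖ = 1 := by rcases he with rfl | rfl <;> simp [Prod.norm_def]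
    refine ⟨((L * N2 wx + L * N2 wy + N2 (fun p => G p - V p * w p)) / c) ^ 2, fun h hh => ?_⟩
    have := d.DQ_est hF he (L := L) (fun p h => (hAL _ _).trans (le_of_eq (by simp [norm_smul, hn])))
      (fun p h => (hBL _ _).trans (le_of_eq (by simp [norm_smul, hn]))) hh
    have p1 : 0 ≤ ∫ p, (DQ e h wx p) ^ 2 := integral_nonneg fun _ => sq_nonneg _
    have p2 : 0 ≤ ∫ p, (DQ e h wy p) ^ 2 := integral_nonneg fun _ => sq_nonneg _
    exact ⟨by linarith, by linarith⟩
  obtain ⟨M1, hM1⟩ := est (1, 0) (Or.inl rfl)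
  obtain ⟨M2, hM2⟩ := est (0, 1) (Or.inr rfl)
  have ix := integrable_of_L2 d.hwx hwx0
  have iy := integrable_of_L2 d.hwy hwy0
  obtain ⟨h11, m11, e11⟩ := DQ_lim d.hwx ix (fun h hh => (hM1 h hh).1)
  obtain ⟨h12, m12, e12⟩ := DQ_lim d.hwx ix (fun h hh => (hM2 h hh).1)
  obtain ⟨h21, m21, e21⟩ := DQ_lim d.hwy iy (fun h hh => (hM1 h hh).2)
  obtain ⟨h22, m22, e22⟩ := DQ_lim d.hwy iy (fun h hh => (hM2 h hh).2)
  refine ⟨⟨h11, h12, h21, h22, m11, m12, m21, m22, e11, e12, e21, e22⟩, ?_⟩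
  refine holder_rep (integrable_of_L2 d.hw d.hw0) m12 hK d.hw0 fun φ hφ => ?_
  rw [hwk _ (hφ.DD _), e12 φ hφ, neg_neg]
end

lemma coef {α R : ℝ} (hα : 0 < α) (hR0 : 0 < R) (hR : R < 1 / 2) :
    ∃ a : ℝ → ℝ, ContDiff ℝ (⊤ : ℕ∞) a ∧ (∃ c, 0 < c ∧ ∀ y, c ≤ a y) ∧ (∀ y, |a y| ≤ 1) ∧
      (∃ L, ∀ y y', |a y - a y'| ≤ L * |y - y'|) ∧
      ∀ y, |y - 1 / 2| ≤ R → a y = y ^ α * y ^ α := by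
  let ζ : ContDiffBump (1 / 2 : ℝ) := ⟨R, (R + 1 / 2) / 2, hR0, by linarith⟩
  set δ : ℝ := 1 / 2 - (R + 1 / 2) / 2 with hδ
  have hδ0 : 0 < δ := by rw [hδ]; linarith
  have hsupp : ∀ y, ζ y ≠ 0 → δ ≤ y ∧ y ≤ 1 := by
    intro y hy
    have : y ∈ Function.support ζ := hy
    rw [ζ.support_eq, Metric.mem_ball, Real.dist_eq, abs_lt] at this
    simp only [ζ] at this
    constructor <;> linarith [this.1, this.2]
  have hts : ∀ y ∈ tsupport ζ, 0 < y := by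
    intro y hy
    rw [ζ.tsupport_eq, Metric.mem_closedBall, Real.dist_eq, abs_le] at hy
    simp only [ζ] at hy
    linarith [hy.1]
  let b : ℝ → ℝ := fun y => ζ y * (y ^ (2 * α) - 1)
  have hb : ContDiff ℝ (⊤ : ℕ∞) b := by
    rw [contDiff_iff_contDiffAt]
    intro y
    by_cases hy : y ∈ tsupport ζ
    · exact ζ.contDiff.contDiffAt.mul
        ((Real.contDiffAt_rpow_const_of_ne (hts y hy).ne').sub contDiffAt_const)
    · have h1 := notMem_tsupport_iff_eventuallyEq.1 hy
      have : b =ᶠ[𝓝 y] fun _ => 0 := by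
        filter_upwards [h1] with s hs
        simp [b, hs]
      exact contDiffAt_const.congr_of_eventuallyEq this
  have hbc : HasCompactSupport b := ζ.hasCompactSupport.mul_right
  have hval : ∀ y, ∃ s, 1 + b y = ζ y * s + (1 - ζ y) * 1 ∧ δ ^ (2 * α) ≤ s ∧ s ≤ 1 := by
    intro y
    by_cases hy : ζ y = 0
    · refine ⟨1, by simp [b, hy], ?_, le_rfl⟩
      exact Real.rpow_le_one hδ0.le (by rw [hδ]; linarith) (by linarith)
    · obtain ⟨h1, h2⟩ := hsupp y hy
      refine ⟨y ^ (2 * α), by simp only [b]; ring, ?_, ?_⟩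
      · exact Real.rpow_le_rpow hδ0.le h1 (by linarith)
      · exact Real.rpow_le_one (by linarith) h2 (by linarith)
  have hc0 : 0 < δ ^ (2 * α) := Real.rpow_pos_of_pos hδ0 _
  have hlow : ∀ y, δ ^ (2 * α) ≤ 1 + b y := by
    intro y
    obtain ⟨s, hs, h1, h2⟩ := hval y
    rw [hs]
    have := ζ.nonneg (x := y)
    have := ζ.le_one (x := y)
    nlinarith
  obtain ⟨L, hL⟩ := ContDiff.lipschitzWith_of_hasCompactSupport hbc (hb.of_le (n := ((⊤ : ℕ∞) : WithTop ℕ∞)) le_rfl) (by simp)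
  refine ⟨fun y => 1 + b y, contDiff_const.add hb, ⟨δ ^ (2 * α), hc0, hlow⟩, ?_, ⟨L, ?_⟩, ?_⟩
  · intro y
    rw [abs_of_nonneg (hc0.le.trans (hlow y))]
    obtain ⟨s, hs, h1, h2⟩ := hval y
    rw [hs]
    have := ζ.nonneg (x := y)
    have := ζ.le_one (x := y)
    nlinarith
  · intro y y'
    have := hL.dist_le_mul y y'
    rw [Real.dist_eq, Real.dist_eq] at this
    simpa using this
  · intro y hy
    have h1 : ζ y = 1 := ζ.one_of_mem_closedBall (by rw [Metric.mem_closedBall, Real.dist_eq]; exact hy)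
    have h2 : 0 < y := by linarith [(abs_le.1 hy).1]
    simp only [b, h1]
    rw [← Real.rpow_add h2]
    ring_nf

lemma subseq_ae {s : ℕ → ℝ × ℝ → ℝ} {s' : ℝ × ℝ → ℝ} (hs : ∀ n, MemLp (s n) 2 volume)
    (hs' : MemLp s' 2 volume) (hsc : Tendsto (fun n => ∫ p, (s n p - s' p) ^ 2) atTop (𝓝 0)) :
    ∃ ns : ℕ → ℕ, StrictMono ns ∧ ∀ᵐ p, Tendsto (fun n => s (ns n) p) atTop (𝓝 (s' p)) := by
  refine TendstoInMeasure.exists_seq_tendsto_ae (μ := volume) ?_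
  refine tendstoInMeasure_of_tendsto_eLpNorm (p := 2) (by simp) (fun n => (hs n).1) hs'.1 ?_
  have e : ∀ n, eLpNorm (s n - s') 2 volume = ENNReal.ofReal (Real.sqrt (∫ p, (s n p - s' p) ^ 2)) := by
    intro n
    rw [((hs n).sub hs').eLpNorm_eq_integral_rpow_norm (by simp) (by simp)]
    congr 1
    rw [Real.sqrt_eq_rpow]
    simp
  simp only [e]
  have := ENNReal.tendsto_ofReal ((Real.continuous_sqrt.tendsto 0).comp hsc)
  simpa using this


structure Loc (S : Set (ℝ × ℝ)) (c L : ℝ) (A B u gx gy f V : ℝ × ℝ → ℝ) (φ : ℕ → ℝ × ℝ → ℝ) :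
    Prop where
  hS : MeasurableSet S
  hSO : S ⊆ Omega
  cpos : 0 < c
  Asm : ContDiff ℝ (⊤ : ℕ∞) A
  Bsm : ContDiff ℝ (⊤ : ℕ∞) B
  Alow : ∀ p, c ≤ A p
  Blow : ∀ p, c ≤ B p
  Abd : ∃ C, ∀ p, |A p| ≤ C
  Bbd : ∃ C, ∀ p, |B p| ≤ C
  Ax : ∀ p, DD (1, 0) A p = 0
  By : ∀ p, DD (0, 1) B p = 0
  hAL : ∀ p q, |A p - A q| ≤ L * ‖p - q‖
  hBL : ∀ p q, |B p - B q| ≤ L * ‖p - q‖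
  hu : MemLp u 2 volume
  hgx : MemLp gx 2 volume
  hgy : MemLp gy 2 volume
  hf : MemLp f 2 volume
  hV : MemLp V 2 volume
  Vpos : ∀ᵐ p, 0 ≤ V p
  wkx : ∀ ψ, IsTestOn S ψ → ∫ p, u p * DD (1, 0) ψ p = - ∫ p, gx p * ψ p
  wky : ∀ ψ, IsTestOn S ψ → ∫ p, u p * DD (0, 1) ψ p = - ∫ p, gy p * ψ p
  eq : ∀ ψ, IsTestOn S ψ → ∫ p, (A p * gx p * DD (1, 0) ψ p + B p * gy p * DD (0, 1) ψ p)
    = ∫ p, (f p - V p * u p) * ψ p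
  hφ : ∀ n, IsTestOn Omega (φ n)
  c0 : Tendsto (fun n => ∫ p in S, (φ n p - u p) ^ 2) atTop (𝓝 0)
  cx : Tendsto (fun n => ∫ p in S, (DD (1, 0) (φ n) p - gx p) ^ 2) atTop (𝓝 0)
  cy : Tendsto (fun n => ∫ p in S, (DD (0, 1) (φ n) p - gy p) ^ 2) atTop (𝓝 0)

lemma cut_lim {S : Set (ℝ × ℝ)} {χ η : ℝ × ℝ → ℝ} (hχ : IsTestOn S χ) (hη : IsTestOn S η)
    {a b : ℕ → ℝ × ℝ → ℝ} (ha : ∀ n, MemLp (a n) 2 volume) (hb : ∀ n, MemLp (b n) 2 volume)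
    (la : Tendsto (fun n => ∫ p in S, (a n p) ^ 2) atTop (𝓝 0))
    (lb : Tendsto (fun n => ∫ p in S, (b n p) ^ 2) atTop (𝓝 0)) :
    Tendsto (fun n => ∫ p, (χ p * a n p + η p * b n p) ^ 2) atTop (𝓝 0) := by
  obtain ⟨C, hC⟩ := hχ.bdd
  obtain ⟨D, hD⟩ := hη.bdd
  have hl : Tendsto (fun n => 2 * C ^ 2 * (∫ p in S, (a n p) ^ 2) +
      2 * D ^ 2 * ∫ p in S, (b n p) ^ 2) atTop (𝓝 0) := by
    simpa using (la.const_mul (2 * C ^ 2)).add (lb.const_mul (2 * D ^ 2))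
  refine squeeze_zero (fun n => integral_nonneg fun _ => sq_nonneg _) (fun n => ?_) hl
  rw [← setIntegral_eq_integral_of_forall_compl_eq_zero (s := S)
    (fun p hp => by rw [hχ.zero_off hp, hη.zero_off hp]; ring)]
  have ia := ((ha n).integrable_sq).integrableOn (s := S)
  have ib := ((hb n).integrable_sq).integrableOn (s := S)
  rw [← integral_const_mul, ← integral_const_mul, ← integral_add (ia.const_mul _) (ib.const_mul _)]
  refine integral_mono ?_ ((ia.const_mul _).add (ib.const_mul _)) fun p => ?_
  · exact ((memLp_bdd_mul hχ.continuous hχ.bdd (ha n)).add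
      (memLp_bdd_mul hη.continuous hη.bdd (hb n))).integrable_sq.integrableOn
  · have h1 : (χ p) ^ 2 ≤ C ^ 2 := sq_le_sq' (by linarith [(abs_le.1 (hC p)).1]) (abs_le.1 (hC p)).2
    have h2 : (η p) ^ 2 ≤ D ^ 2 := sq_le_sq' (by linarith [(abs_le.1 (hD p)).1]) (abs_le.1 (hD p)).2
    have h3 := mul_le_mul_of_nonneg_right h1 (sq_nonneg (a n p))
    have h4 := mul_le_mul_of_nonneg_right h2 (sq_nonneg (b n p))
    show (χ p * a n p + η p * b n p) ^ 2 ≤ 2 * C ^ 2 * (a n p) ^ 2 + 2 * D ^ 2 * (b n p) ^ 2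
    nlinarith [sq_nonneg (χ p * a n p - η p * b n p)]

section
variable {S : Set (ℝ × ℝ)} {c L : ℝ} {A B u gx gy f V : ℝ × ℝ → ℝ} {φ : ℕ → ℝ × ℝ → ℝ}
  {χ : ℝ × ℝ → ℝ}

lemma Loc.wk {u g : ℝ × ℝ → ℝ} (hu : MemLp u 2 volume) (hg : MemLp g 2 volume) {e : ℝ × ℝ}
    (h : ∀ ψ, IsTestOn S ψ → ∫ p, u p * DD e ψ p = - ∫ p, g p * ψ p) (hχ : IsTestOn S χ)
    {φ : ℝ × ℝ → ℝ} (hφ : IsTestOn univ φ) :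
    ∫ p, (χ p * u p) * DD e φ p = - ∫ p, (χ p * g p + DD e χ p * u p) * φ p := by
  have t : IsTestOn S (fun p => φ p * χ p) := hχ.mul_right hφ.1
  have h1 := h _ t
  have i1 : Integrable (fun p => u p * DD e (fun p => φ p * χ p) p) volume :=
    L2_mul hu ((t.DD e).memLp 2)
  have i2 : Integrable (fun p => (DD e χ p * u p) * φ p) volume :=
    L2_mul (memLp_bdd_mul (hχ.DD e).continuous (hχ.DD e).bdd hu) (hφ.memLp 2)
  have i3 : Integrable (fun p => g p * (φ p * χ p)) volume := L2_mul hg (t.memLp 2)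
  have e1 : ∫ p, (χ p * u p) * DD e φ p =
      (∫ p, u p * DD e (fun p => φ p * χ p) p) - ∫ p, (DD e χ p * u p) * φ p := by
    rw [← integral_sub i1 i2]
    congr 1; funext p
    rw [DD_mul hφ.1 hχ.1]; ring
  have e2 : ∫ p, (χ p * g p + DD e χ p * u p) * φ p =
      (∫ p, g p * (φ p * χ p)) + ∫ p, (DD e χ p * u p) * φ p := by
    rw [← integral_add i3 i2]
    congr 1; funext p
    ring
  rw [e1, e2, h1]; ring

lemma Loc.eqn (l : Loc S c L A B u gx gy f V φ) (hχ : IsTestOn S χ) {ξ : ℝ × ℝ → ℝ}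
    (hξ : IsTestOn univ ξ) :
    ∫ p, (A p * (χ p * gx p + DD (1, 0) χ p * u p) * DD (1, 0) ξ p +
      B p * (χ p * gy p + DD (0, 1) χ p * u p) * DD (0, 1) ξ p) =
    ∫ p, ((χ p * f p - 2 * (A p * (DD (1, 0) χ p * gx p)) - 2 * (B p * (DD (0, 1) χ p * gy p))
      - (A p * (DD (1, 0) (DD (1, 0) χ) p * u p) + B p * (DD (0, 1) (DD (0, 1) χ) p * u p)))
      - V p * (χ p * u p)) * ξ p := by
  have hx := hχ.DD (1, 0)
  have hy := hχ.DD (0, 1)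
  have hxx := hx.DD (1, 0)
  have hyy := hy.DD (0, 1)
  have Ac := l.Asm.continuous
  have Bc := l.Bsm.continuous
  have t : IsTestOn S (fun p => ξ p * χ p) := hχ.mul_right hξ.1
  have s1 : IsTestOn S (fun p => ξ p * DD (1, 0) χ p) := hx.mul_right hξ.1
  have s2 : IsTestOn S (fun p => ξ p * DD (0, 1) χ p) := hy.mul_right hξ.1
  have t1 : IsTestOn S (fun p => A p * (ξ p * DD (1, 0) χ p)) := s1.mul_right l.Asm
  have t2 : IsTestOn S (fun p => B p * (ξ p * DD (0, 1) χ p)) := s2.mul_right l.Bsm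
  have E0 := l.eq _ t
  have E1 := l.wkx _ t1
  have E2 := l.wky _ t2
  have mA := memLp_bdd_mul Ac l.Abd l.hgx
  have mB := memLp_bdd_mul Bc l.Bbd l.hgy
  have i0 : Integrable (fun p => A p * gx p * DD (1, 0) (fun p => ξ p * χ p) p +
      B p * gy p * DD (0, 1) (fun p => ξ p * χ p) p) volume :=
    (L2_mul mA ((t.DD _).memLp 2)).add (L2_mul mB ((t.DD _).memLp 2))
  have i1 : Integrable (fun p => u p * DD (1, 0) (fun p => A p * (ξ p * DD (1, 0) χ p)) p) volume :=
    L2_mul l.hu ((t1.DD _).memLp 2)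
  have i2 : Integrable (fun p => u p * DD (0, 1) (fun p => B p * (ξ p * DD (0, 1) χ p)) p) volume :=
    L2_mul l.hu ((t2.DD _).memLp 2)
  let R : ℝ × ℝ → ℝ := fun p => (A p * (DD (1, 0) χ p * gx p) + B p * (DD (0, 1) χ p * gy p)
      + (A p * (DD (1, 0) (DD (1, 0) χ) p * u p) + B p * (DD (0, 1) (DD (0, 1) χ) p * u p)))
  have mR : MemLp R 2 volume := by
    refine ((memLp_bdd_mul Ac l.Abd (memLp_bdd_mul hx.continuous hx.bdd l.hgx)).add
      (memLp_bdd_mul Bc l.Bbd (memLp_bdd_mul hy.continuous hy.bdd l.hgy))).add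
      ((memLp_bdd_mul Ac l.Abd (memLp_bdd_mul hxx.continuous hxx.bdd l.hu)).add
      (memLp_bdd_mul Bc l.Bbd (memLp_bdd_mul hyy.continuous hyy.bdd l.hu)))
  have iR : Integrable (fun p => R p * ξ p) volume := L2_mul mR (hξ.memLp 2)
  have j0 : Integrable (fun p => (f p - V p * u p) * (ξ p * χ p)) volume := by
    have a1 := L2_mul l.hf (t.memLp 2)
    have a2 := L2_mul l.hV (memLp_bdd_mul t.continuous t.bdd l.hu)
    refine (a1.sub a2).congr (ae_of_all _ fun p => ?_)
    simp only [Pi.sub_apply]; ring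
  have j1 : Integrable (fun p => gx p * (A p * (ξ p * DD (1, 0) χ p))) volume :=
    L2_mul l.hgx (t1.memLp 2)
  have j2 : Integrable (fun p => gy p * (B p * (ξ p * DD (0, 1) χ p))) volume :=
    L2_mul l.hgy (t2.memLp 2)
  have L1 : ∫ p, (A p * (χ p * gx p + DD (1, 0) χ p * u p) * DD (1, 0) ξ p +
      B p * (χ p * gy p + DD (0, 1) χ p * u p) * DD (0, 1) ξ p) =
      (∫ p, (A p * gx p * DD (1, 0) (fun p => ξ p * χ p) p +
      B p * gy p * DD (0, 1) (fun p => ξ p * χ p) p)) +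
      (∫ p, u p * DD (1, 0) (fun p => A p * (ξ p * DD (1, 0) χ p)) p) +
      (∫ p, u p * DD (0, 1) (fun p => B p * (ξ p * DD (0, 1) χ p)) p) - ∫ p, R p * ξ p := by
    rw [← integral_add i0 i1, ← integral_add (i0.fun_add i1) i2, ← integral_sub ((i0.fun_add i1).fun_add i2) iR]
    congr 1; funext p
    rw [DD_mul l.Asm s1.1, DD_mul l.Bsm s2.1, DD_mul hξ.1 hχ.1, DD_mul hξ.1 hχ.1,
      DD_mul hξ.1 hx.1, DD_mul hξ.1 hy.1, l.Ax, l.By]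
    simp only [R]; ring
  have j3 := (j1.fun_add j2).fun_add iR
  rw [L1, E0, E1, E2, add_assoc, ← neg_add, ← sub_eq_add_neg, sub_sub, ← integral_add j1 j2,
    ← integral_add (j1.fun_add j2) iR, ← integral_sub j0 j3]
  congr 1; funext p
  simp only [R]; ring

lemma Loc.data (l : Loc S c L A B u gx gy f V φ) (hχ : IsTestOn S χ) : ∃ G z,
    Data c A B (fun p => χ p * u p) (fun p => χ p * gx p + DD (1, 0) χ p * u p)
      (fun p => χ p * gy p + DD (0, 1) χ p * u p) G V z := by
  have hx := hχ.DD (1, 0)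
  have hy := hχ.DD (0, 1)
  have hxx := hx.DD (1, 0)
  have hyy := hy.DD (0, 1)
  have Ac := l.Asm.continuous
  have Bc := l.Bsm.continuous
  have mw := memLp_bdd_mul hχ.continuous hχ.bdd l.hu
  have tz : ∀ n, IsTestOn Omega (fun p => χ p * φ n p) := fun n => (l.hφ n).mul_right hχ.1
  have m0 : ∀ n, MemLp (fun p => φ n p - u p) 2 volume := fun n => ((l.hφ n).memLp 2).sub l.hu
  have m1 : ∀ n, MemLp (fun p => DD (1, 0) (φ n) p - gx p) 2 volume :=
    fun n => (((l.hφ n).DD _).memLp 2).sub l.hgx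
  have m2 : ∀ n, MemLp (fun p => DD (0, 1) (φ n) p - gy p) 2 volume :=
    fun n => (((l.hφ n).DD _).memLp 2).sub l.hgy
  have z0 : Tendsto (fun n => ∫ p, (χ p * φ n p - χ p * u p) ^ 2) atTop (𝓝 0) := by
    have := (cut_lim hχ hχ m0 m0 l.c0 l.c0).const_mul (1 / 4)
    rw [mul_zero] at this
    refine this.congr fun n => ?_
    rw [← integral_const_mul]
    congr 1; funext p; ring
  have zx : Tendsto (fun n => ∫ p, (DD (1, 0) (fun p => χ p * φ n p) p -
      (χ p * gx p + DD (1, 0) χ p * u p)) ^ 2) atTop (𝓝 0) := by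
    refine (cut_lim hχ hx m1 m0 l.cx l.c0).congr fun n => ?_
    congr 1; funext p
    rw [DD_mul hχ.1 (l.hφ n).1]; ring
  have zy : Tendsto (fun n => ∫ p, (DD (0, 1) (fun p => χ p * φ n p) p -
      (χ p * gy p + DD (0, 1) χ p * u p)) ^ 2) atTop (𝓝 0) := by
    refine (cut_lim hχ hy m2 m0 l.cy l.c0).congr fun n => ?_
    congr 1; funext p
    rw [DD_mul hχ.1 (l.hφ n).1]; ring
  obtain ⟨ns, hns, hae⟩ := subseq_ae (fun n => (tz n).memLp 2) mw z0
  have mG : MemLp (fun p => χ p * f p - 2 * (A p * (DD (1, 0) χ p * gx p)) -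
      2 * (B p * (DD (0, 1) χ p * gy p)) - (A p * (DD (1, 0) (DD (1, 0) χ) p * u p) +
      B p * (DD (0, 1) (DD (0, 1) χ) p * u p))) 2 volume := by
    refine (((memLp_bdd_mul hχ.continuous hχ.bdd l.hf).sub
      ((memLp_bdd_mul Ac l.Abd (memLp_bdd_mul hx.continuous hx.bdd l.hgx)).const_mul 2)).sub
      ((memLp_bdd_mul Bc l.Bbd (memLp_bdd_mul hy.continuous hy.bdd l.hgy)).const_mul 2)).sub
      ((memLp_bdd_mul Ac l.Abd (memLp_bdd_mul hxx.continuous hxx.bdd l.hu)).add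
      (memLp_bdd_mul Bc l.Bbd (memLp_bdd_mul hyy.continuous hyy.bdd l.hu)))
  have off : ∀ p, p ∉ Omega → p ∉ S := fun p hp h => hp (l.hSO h)
  refine ⟨_, fun n p => χ p * φ (ns n) p, l.cpos, Ac, Bc, l.Alow, l.Blow, l.Abd, l.Bbd, mw,
    (memLp_bdd_mul hχ.continuous hχ.bdd l.hgx).add (memLp_bdd_mul hx.continuous hx.bdd l.hu),
    (memLp_bdd_mul hχ.continuous hχ.bdd l.hgy).add (memLp_bdd_mul hy.continuous hy.bdd l.hu),
    mG, l.hV, integrable_of_L2 mG fun p hp => ?_, l.Vpos, fun p hp => ?_, fun n => tz _, hae,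
    zx.comp hns.tendsto_atTop, zy.comp hns.tendsto_atTop, fun ξ hξ => l.eqn hχ hξ⟩
  · have hp := off p hp
    rw [hχ.zero_off hp, hx.zero_off hp, hy.zero_off hp, hxx.zero_off hp, hyy.zero_off hp]; ring
  · rw [hχ.zero_off (off p hp), zero_mul]

lemma Loc.regular (l : Loc S c L A B u gx gy f V φ) (hχ : IsTestOn S χ) {O : Set (ℝ × ℝ)}
    (hO : IsOpen O) (hOc : closure O ⊆ Omega) (hχ1 : ∀ p ∈ O, χ p = 1) :
    (∃ g₁₁ g₁₂ g₂₁ g₂₂ : ℝ × ℝ → ℝ,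
        HasWeakDerivXOn O gx g₁₁ ∧ HasWeakDerivYOn O gx g₁₂ ∧
        HasWeakDerivXOn O gy g₂₁ ∧ HasWeakDerivYOn O gy g₂₂ ∧
        MemLp u 2 (volume.restrict O) ∧
        MemLp gx 2 (volume.restrict O) ∧ MemLp gy 2 (volume.restrict O) ∧
        MemLp g₁₁ 2 (volume.restrict O) ∧ MemLp g₁₂ 2 (volume.restrict O) ∧
        MemLp g₂₁ 2 (volume.restrict O) ∧ MemLp g₂₂ 2 (volume.restrict O)) ∧
      (∃ γ : NNReal, 0 < γ ∧ (γ : ℝ) < 1 ∧ ∃ (C : NNReal) (w : ℝ × ℝ → ℝ),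
        (∀ᵐ p ∂(volume.restrict O), w p = u p) ∧
        HolderOnWith C γ w (closure O)) := by
  obtain ⟨G, z, d⟩ := l.data hχ
  have hx := hχ.DD (1, 0)
  have hy := hχ.DD (0, 1)
  have off : ∀ p, p ∉ Omega → p ∉ S := fun p hp h => hp (l.hSO h)
  have hD : ∀ e, ∀ p ∈ O, DD e χ p = 0 := by
    intro e p hp
    have : χ =ᶠ[𝓝 p] fun _ => 1 := by
      filter_upwards [hO.mem_nhds hp] with q hq using hχ1 q hq
    simp [DD, this.fderiv_eq]
  obtain ⟨⟨h11, h12, h21, h22, m11, m12, m21, m22, e11, e12, e21, e22⟩, C, W, hW, hH⟩ :=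
    d.regular l.hAL l.hBL
    (fun p hp => by rw [hχ.zero_off (off p hp), hx.zero_off (off p hp)]; ring)
    (fun p hp => by rw [hχ.zero_off (off p hp), hy.zero_off (off p hp)]; ring)
    (fun ξ hξ => Loc.wk l.hu l.hgx l.wkx hχ hξ)
  have li : ∀ {g : ℝ × ℝ → ℝ}, MemLp g 2 volume → LocallyIntegrableOn g O volume := fun hg =>
    (hg.locallyIntegrable (by norm_num)).locallyIntegrableOn _
  have key : ∀ {g h : ℝ × ℝ → ℝ} {e e' : ℝ × ℝ}, (∀ ξ, IsTestOn univ ξ →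
      ∫ p, (χ p * g p + DD e' χ p * u p) * DD e ξ p = - ∫ p, h p * ξ p) →
      ∀ ξ, IsTestOn O ξ → ∫ p in O, g p * DD e ξ p = - ∫ p in O, h p * ξ p := by
    intro g h e e' H ξ hξ
    have := H ξ (hξ.mono (subset_univ _))
    rw [setIntegral_eq_integral_of_forall_compl_eq_zero
      (fun p hp => by rw [(hξ.DD e).zero_off hp, mul_zero]),
      setIntegral_eq_integral_of_forall_compl_eq_zero
      (fun p hp => by rw [hξ.zero_off hp, mul_zero]), ← this]
    congr 1; funext p
    by_cases hp : p ∈ O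
    · rw [hχ1 p hp, hD _ p hp]; ring
    · rw [(hξ.DD e).zero_off hp]; ring
  refine ⟨⟨h11, h12, h21, h22, ⟨li l.hgx, li m11, key e11⟩, ⟨li l.hgx, li m12, key e12⟩,
    ⟨li l.hgy, li m21, key e21⟩, ⟨li l.hgy, li m22, key e22⟩, l.hu.restrict _, l.hgx.restrict _,
    l.hgy.restrict _, m11.restrict _, m12.restrict _, m21.restrict _, m22.restrict _⟩,
    1 / 2, by norm_num, ?_, C, W, ?_, hH.mono hOc⟩
  · rw [← NNReal.coe_one, NNReal.coe_lt_coe]; exact NNReal.half_lt_self one_ne_zero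
  · rw [ae_restrict_iff' hO.measurableSet]
    filter_upwards [hW] with p hp hpO
    rw [hp, hχ1 p hpO, one_mul]
end


section
variable {S : Set (ℝ × ℝ)} {k : ℝ} {ω g : ℝ × ℝ → ℝ}

lemma wt_mem (hS : MeasurableSet S) (hSO : S ⊆ Omega) (hk : 0 < k)
    (hω : ∀ p ∈ S, k ≤ ω p) (hgm : AEStronglyMeasurable g (volume.restrict Omega))
    (hg : MemLp (fun p => ω p * g p) 2 (volume.restrict Omega)) :
    MemLp g 2 (volume.restrict S) := by
  refine MemLp.of_le_mul (c := k⁻¹) (hg.mono_measure (Measure.restrict_mono hSO le_rfl))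
    (hgm.mono_set hSO) ?_
  rw [ae_restrict_iff' hS]
  refine ae_of_all _ fun p hp => ?_
  rw [norm_mul, Real.norm_of_nonneg (hk.le.trans (hω p hp)), le_inv_mul_iff₀ hk]
  exact mul_le_mul_of_nonneg_right (hω p hp) (norm_nonneg _)

lemma wt_le (hS : MeasurableSet S) (hSO : S ⊆ Omega) (hk : 0 < k)
    (hω : ∀ p ∈ S, k ≤ ω p) (hgm : AEStronglyMeasurable g (volume.restrict Omega))
    (hg : MemLp (fun p => ω p * g p) 2 (volume.restrict Omega)) :
    ∫ p in S, (g p) ^ 2 ≤ (k ^ 2)⁻¹ * ∫ p in Omega, (ω p * g p) ^ 2 := by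
  have i1 := (wt_mem hS hSO hk hω hgm hg).integrable_sq
  have i2 := (hg.mono_measure (Measure.restrict_mono hSO le_rfl)).integrable_sq
  calc ∫ p in S, (g p) ^ 2 ≤ ∫ p in S, (k ^ 2)⁻¹ * (ω p * g p) ^ 2 := by
        refine setIntegral_mono_on i1 (i2.const_mul _) hS fun p hp => ?_
        rw [le_inv_mul_iff₀ (by positivity), mul_pow]
        exact mul_le_mul_of_nonneg_right (pow_le_pow_left₀ hk.le (hω p hp) 2) (sq_nonneg _)
    _ = (k ^ 2)⁻¹ * ∫ p in S, (ω p * g p) ^ 2 := integral_const_mul _ _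
    _ ≤ _ := by
        refine mul_le_mul_of_nonneg_left ?_ (by positivity)
        exact setIntegral_mono_set hg.integrable_sq (ae_of_all _ fun _ => sq_nonneg _)
          (ae_of_all _ hSO)
end

lemma w2_mem {α : ℝ} (hα : 0 < α) {ψ : ℝ × ℝ → ℝ} (hψ : MemLp ψ 2 volume) :
    MemLp (fun p => p.2 ^ α * ψ p) 2 (volume.restrict Omega) := by
  refine MemLp.of_le_mul (c := 1) (hψ.restrict _)
    ((measurable_snd.pow_const α).aestronglyMeasurable.mul hψ.1.restrict) ?_
  rw [ae_restrict_iff' measurableSet_Omega]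
  refine ae_of_all _ fun p hp => ?_
  rw [norm_mul]
  refine mul_le_mul_of_nonneg_right ?_ (norm_nonneg _)
  rw [Real.norm_of_nonneg (Real.rpow_nonneg hp.2.1.le _)]
  exact Real.rpow_le_one hp.2.1.le hp.2.2.le hα.le

lemma w1_mem {α : ℝ} (hα : 0 < α) {ψ : ℝ × ℝ → ℝ} (hψ : MemLp ψ 2 volume) :
    MemLp (fun p => p.1 ^ α * ψ p) 2 (volume.restrict Omega) := by
  refine MemLp.of_le_mul (c := 1) (hψ.restrict _)
    ((measurable_fst.pow_const α).aestronglyMeasurable.mul hψ.1.restrict) ?_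
  rw [ae_restrict_iff' measurableSet_Omega]
  refine ae_of_all _ fun p hp => ?_
  rw [norm_mul]
  refine mul_le_mul_of_nonneg_right ?_ (norm_nonneg _)
  rw [Real.norm_of_nonneg (Real.rpow_nonneg hp.1.1.le _)]
  exact Real.rpow_le_one hp.1.1.le hp.1.2.le hα.le

lemma test_wk {ψ : ℝ × ℝ → ℝ} (hψ : IsTestOn Omega ψ) (e : ℝ × ℝ) (φ : ℝ × ℝ → ℝ)
    (hφ : IsTestOn Omega φ) : ∫ p in Omega, ψ p * DD e φ p = - ∫ p in Omega, DD e ψ p * φ p := by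
  rw [setIntegral_eq_integral_of_forall_compl_eq_zero
      (fun p hp => by rw [hψ.zero_off hp, zero_mul]),
      setIntegral_eq_integral_of_forall_compl_eq_zero
      (fun p hp => by rw [hφ.zero_off hp, mul_zero])]
  exact IBP hψ hφ e

lemma test_mem {α₁ α₂ : ℝ} (h₁ : 0 < α₁) (h₂ : 0 < α₂) {V ψ : ℝ × ℝ → ℝ}
    (hV : MemLp V 2 (volume.restrict Omega)) (hψ : IsTestOn Omega ψ) :
    MemH0 α₁ α₂ V ψ (DD (1, 0) ψ) (DD (0, 1) ψ) := by
  have li : ∀ {g : ℝ × ℝ → ℝ}, IsTestOn Omega g → LocallyIntegrableOn g Omega volume := fun hg =>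
    (hg.integrable.locallyIntegrable).locallyIntegrableOn _
  refine ⟨⟨⟨(hψ.memLp 2).restrict _, ⟨li hψ, li (hψ.DD _), fun φ hφ => test_wk hψ _ φ hφ⟩,
    ⟨li hψ, li (hψ.DD _), fun φ hφ => test_wk hψ _ φ hφ⟩, w2_mem h₁ ((hψ.DD _).memLp 2),
    w1_mem h₂ ((hψ.DD _).memLp 2)⟩, fun ε hε => ⟨ψ, hψ, ?_⟩⟩, ?_⟩
  · simpa [H1Norm, pdx_eq, pdy_eq] using hε
  · have := L2_mul hV (((hψ.mul_right hψ.1).memLp 2).restrict Omega)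
    refine Integrable.congr this (ae_of_all _ fun p => ?_)
    show V p * (ψ p * ψ p) = V p * (ψ p) ^ 2
    ring

lemma Omega_eq : Omega = Metric.ball ((1 / 2, 1 / 2) : ℝ × ℝ) (1 / 2) := by
  ext p
  simp only [Omega, mem_prod, mem_Ioo, Metric.mem_ball, Prod.dist_eq, max_lt_iff, Real.dist_eq,
    abs_lt]
  constructor
  · rintro ⟨⟨a, b⟩, c, d⟩; refine ⟨⟨?_, ?_⟩, ?_, ?_⟩ <;> linarith
  · rintro ⟨⟨a, b⟩, c, d⟩; refine ⟨⟨?_, ?_⟩, ?_, ?_⟩ <;> linarith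

lemma wkX_congr {O : Set (ℝ × ℝ)} {g g' h : ℝ × ℝ → ℝ} (hO : MeasurableSet O)
    (hg : LocallyIntegrableOn g O volume) (he : ∀ p ∈ O, g' p = g p)
    (H : HasWeakDerivXOn O g' h) : HasWeakDerivXOn O g h := by
  refine ⟨hg, H.2.1, fun φ hφ => ?_⟩
  rw [← H.2.2 φ hφ]
  exact setIntegral_congr_fun hO fun p hp => by simp only [he p hp]

lemma wkY_congr {O : Set (ℝ × ℝ)} {g g' h : ℝ × ℝ → ℝ} (hO : MeasurableSet O)
    (hg : LocallyIntegrableOn g O volume) (he : ∀ p ∈ O, g' p = g p)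
    (H : HasWeakDerivYOn O g' h) : HasWeakDerivYOn O g h := by
  refine ⟨hg, H.2.1, fun φ hφ => ?_⟩
  rw [← H.2.2 φ hφ]
  exact setIntegral_congr_fun hO fun p hp => by simp only [he p hp]

lemma DD_fst_zero {a : ℝ → ℝ} (ha : ContDiff ℝ (⊤ : ℕ∞) a) (p : ℝ × ℝ) :
    DD (1, 0) (fun p => a p.2) p = 0 := by
  have h := DD_comp (φ := Prod.snd) contDiff_snd ha (1, 0) p
  rw [h]; simp [DD, fderiv_snd]

lemma DD_snd_zero {a : ℝ → ℝ} (ha : ContDiff ℝ (⊤ : ℕ∞) a) (p : ℝ × ℝ) :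
    DD (0, 1) (fun p => a p.1) p = 0 := by
  have h := DD_comp (φ := Prod.fst) contDiff_fst ha (0, 1) p
  rw [h]; simp [DD, fderiv_fst]

lemma approx {α₁ α₂ : ℝ} (h₁ : 0 < α₁) (h₂ : 0 < α₂) {u gx gy : ℝ × ℝ → ℝ}
    (hu : MemH10 α₁ α₂ u gx gy) {S : Set (ℝ × ℝ)} (hS : MeasurableSet S) (hSO : S ⊆ Omega)
    {δ : ℝ} (hδ : 0 < δ) (hδS : ∀ p ∈ S, δ ≤ p.1 ∧ δ ≤ p.2) :
    ∃ φ : ℕ → ℝ × ℝ → ℝ, (∀ n, IsTestOn Omega (φ n)) ∧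
      Tendsto (fun n => ∫ p in S, (φ n p - S.indicator u p) ^ 2) atTop (𝓝 0) ∧
      Tendsto (fun n => ∫ p in S, (DD (1, 0) (φ n) p - S.indicator gx p) ^ 2) atTop (𝓝 0) ∧
      Tendsto (fun n => ∫ p in S, (DD (0, 1) (φ n) p - S.indicator gy p) ^ 2) atTop (𝓝 0) := by
  have hε : ∀ n : ℕ, (0:ℝ) < 1 / ((n : ℝ) + 1) := fun n => by positivity
  choose φ hφ hN using fun n : ℕ => hu.2 _ (hε n)
  have hm := hu.1
  have hl : Tendsto (fun n : ℕ => (1 / ((n : ℝ) + 1)) ^ 2) atTop (𝓝 0) := by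
    simpa using (tendsto_one_div_add_atTop_nhds_zero_nat (𝕜 := ℝ)).pow 2
  have bd : ∀ n, (∫ p in Omega, (u p - φ n p) ^ 2) ≤ (1 / ((n : ℝ) + 1)) ^ 2 ∧
      (∫ p in Omega, (p.2 ^ α₁ * (gx p - DD (1, 0) (φ n) p)) ^ 2) ≤ (1 / ((n : ℝ) + 1)) ^ 2 ∧
      (∫ p in Omega, (p.1 ^ α₂ * (gy p - DD (0, 1) (φ n) p)) ^ 2) ≤ (1 / ((n : ℝ) + 1)) ^ 2 := by
    intro n
    have h := hN n
    rw [H1Norm, Real.sqrt_lt' (hε n)] at h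
    have a1 : 0 ≤ ∫ p in Omega, (u p - φ n p) ^ 2 := integral_nonneg fun _ => sq_nonneg _
    have a2 : 0 ≤ ∫ p in Omega, (p.2 ^ α₁ * (gx p - DD (1, 0) (φ n) p)) ^ 2 :=
      integral_nonneg fun _ => sq_nonneg _
    have a3 : 0 ≤ ∫ p in Omega, (p.1 ^ α₂ * (gy p - DD (0, 1) (φ n) p)) ^ 2 :=
      integral_nonneg fun _ => sq_nonneg _
    simp only [pdx_eq, pdy_eq] at h
    refine ⟨?_, ?_, ?_⟩ <;> linarith
  have gen : ∀ {ω g : ℝ × ℝ → ℝ} {ψ : ℕ → ℝ × ℝ → ℝ} {k : ℝ}, 0 < k → (∀ p ∈ S, k ≤ ω p) →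
      AEStronglyMeasurable g (volume.restrict Omega) →
      (∀ n, IsTestOn Omega (ψ n)) →
      (∀ n, MemLp (fun p => ω p * (g p - ψ n p)) 2 (volume.restrict Omega)) →
      (∀ n : ℕ, (∫ p in Omega, (ω p * (g p - ψ n p)) ^ 2) ≤ (1 / ((n : ℝ) + 1)) ^ 2) →
      Tendsto (fun n => ∫ p in S, (ψ n p - S.indicator g p) ^ 2) atTop (𝓝 0) := by
    intro ω g ψ k hk hω hg hψ hm hb
    have hl' := hl.const_mul ((k ^ 2)⁻¹)
    rw [mul_zero] at hl'
    refine squeeze_zero (fun n => integral_nonneg fun _ => sq_nonneg _) (fun n => ?_) hl'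
    have e : ∫ p in S, (ψ n p - S.indicator g p) ^ 2 = ∫ p in S, (g p - ψ n p) ^ 2 := by
      refine setIntegral_congr_fun hS fun p hp => ?_
      simp only [indicator_of_mem hp]; ring
    rw [e]
    refine (wt_le hS hSO hk hω (hg.sub (hψ n).continuous.aestronglyMeasurable) (hm n)).trans ?_
    exact mul_le_mul_of_nonneg_left (hb n) (by positivity)
  refine ⟨φ, hφ, ?_, ?_, ?_⟩
  · refine gen (ω := fun _ => 1) one_pos (fun _ _ => le_rfl) hm.memL2.1 hφ (fun n => ?_) (fun n => ?_)
    · simp only [one_mul]; exact hm.memL2.sub (((hφ n).memLp 2).restrict _)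
    · simp only [one_mul]; exact (bd n).1
  · refine gen (ω := fun p => p.2 ^ α₁) (Real.rpow_pos_of_pos hδ α₁)
      (fun p hp => Real.rpow_le_rpow hδ.le (hδS p hp).2 h₁.le) hm.weakX.2.1.aestronglyMeasurable
      (fun n => (hφ n).DD _) (fun n => ?_) (fun n => (bd n).2.1)
    refine (hm.wgx.sub (w2_mem h₁ (((hφ n).DD (1, 0)).memLp 2))).ae_eq (ae_of_all _ fun p => ?_)
    simp only [Pi.sub_apply]; ring
  · refine gen (ω := fun p => p.1 ^ α₂) (Real.rpow_pos_of_pos hδ α₂)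
      (fun p hp => Real.rpow_le_rpow hδ.le (hδS p hp).1 h₂.le) hm.weakY.2.1.aestronglyMeasurable
      (fun n => (hφ n).DD _) (fun n => ?_) (fun n => (bd n).2.2)
    refine (hm.wgy.sub (w1_mem h₂ (((hφ n).DD (0, 1)).memLp 2))).ae_eq (ae_of_all _ fun p => ?_)
    simp only [Pi.sub_apply]; ring

lemma wk_loc {S : Set (ℝ × ℝ)} (hSO : S ⊆ Omega) {u g ψ : ℝ × ℝ → ℝ} {e : ℝ × ℝ}
    (h : ∫ p in Omega, u p * DD e ψ p = - ∫ p in Omega, g p * ψ p) (hψ : IsTestOn S ψ) :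
    ∫ p, S.indicator u p * DD e ψ p = - ∫ p, S.indicator g p * ψ p := by
  have hO := hψ.mono hSO
  rw [setIntegral_eq_integral_of_forall_compl_eq_zero
      (fun p hp => by rw [(hO.DD e).zero_off hp, mul_zero]),
      setIntegral_eq_integral_of_forall_compl_eq_zero
      (fun p hp => by rw [hO.zero_off hp, mul_zero])] at h
  have e1 : ∀ p, S.indicator u p * DD e ψ p = u p * DD e ψ p := fun p => by
    by_cases hp : p ∈ S
    · simp [hp]
    · simp [(hψ.DD e).zero_off hp]
  have e2 : ∀ p, S.indicator g p * ψ p = g p * ψ p := fun p => by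
    by_cases hp : p ∈ S
    · simp [hp]
    · simp [hψ.zero_off hp]
  simp only [e1, e2, h]

lemma interior_aux (α₁ α₂ ppow : ℝ)
    (hα₁ : α₁ ∈ Ioo (0:ℝ) (1/2)) (hα₂ : α₂ ∈ Ioo (0:ℝ) (1/2))
    (hp : 2 ≤ ppow) (V : ℝ × ℝ → ℝ)
    (hV : MemLp V (ENNReal.ofReal ppow) (volume.restrict Omega))
    (hVpos : ∀ᵐ p ∂(volume.restrict Omega), 0 ≤ V p)
    (f : ℝ × ℝ → ℝ) (hf : MemLp f 2 (volume.restrict Omega))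
    (u gx gy : ℝ × ℝ → ℝ) (hu : MemH0 α₁ α₂ V u gx gy)
    (hsol : ∀ v hx hy : ℝ × ℝ → ℝ, MemH0 α₁ α₂ V v hx hy →
      aForm α₁ α₂ V u gx gy v hx hy = ∫ p in Omega, f p * v p) (O : Set (ℝ × ℝ)) (hO : IsOpen O)
    (hOc : closure O ⊆ Omega) :
      ((∃ g₁₁ g₁₂ g₂₁ g₂₂ : ℝ × ℝ → ℝ,
        HasWeakDerivXOn O gx g₁₁ ∧ HasWeakDerivYOn O gx g₁₂ ∧
        HasWeakDerivXOn O gy g₂₁ ∧ HasWeakDerivYOn O gy g₂₂ ∧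
        MemLp u 2 (volume.restrict O) ∧
        MemLp gx 2 (volume.restrict O) ∧ MemLp gy 2 (volume.restrict O) ∧
        MemLp g₁₁ 2 (volume.restrict O) ∧ MemLp g₁₂ 2 (volume.restrict O) ∧
        MemLp g₂₁ 2 (volume.restrict O) ∧ MemLp g₂₂ 2 (volume.restrict O)) ∧
      (∃ γ : NNReal, 0 < γ ∧ (γ : ℝ) < 1 ∧ ∃ (C : NNReal) (w : ℝ × ℝ → ℝ),
        (∀ᵐ p ∂(volume.restrict O), w p = u p) ∧
        HolderOnWith C γ w (closure O))) := by
  have h₁ := hα₁.1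
  have h₂ := hα₂.1
  have hm := hu.1.1
  have : IsFiniteMeasure (volume.restrict Omega) := ⟨by
    rw [Measure.restrict_apply_univ, volume_Omega]; simp⟩
  have hV2 : MemLp V 2 (volume.restrict Omega) := hV.mono_exponent (by
    rw [show (2 : ENNReal) = ENNReal.ofReal 2 by simp]; exact ENNReal.ofReal_le_ofReal hp)
  obtain ⟨r', hr', hsub⟩ := exists_lt_subset_ball isClosed_closure (Omega_eq ▸ hOc)
  set r0 := max r' (1 / 4) with hr0
  have r0pos : 0 < r0 := lt_of_lt_of_le (by norm_num) (le_max_right _ _)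
  have r0lt : r0 < 1 / 2 := max_lt hr' (by norm_num)
  set R := (r0 + 1 / 2) / 2 with hR
  have hR2 : R < 1 / 2 := by rw [hR]; linarith
  have hR1 : r0 < R := by rw [hR]; linarith
  have hRp : 0 < R := r0pos.trans hR1
  let χ : ContDiffBump ((1 / 2, 1 / 2) : ℝ × ℝ) := ⟨r0, R, r0pos, hR1⟩
  set S := Metric.closedBall ((1 / 2, 1 / 2) : ℝ × ℝ) R with hSdef
  have hS : MeasurableSet S := Metric.isClosed_closedBall.measurableSet
  have hSO : S ⊆ Omega := by rw [Omega_eq]; exact Metric.closedBall_subset_ball hR2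
  have hSc : ∀ p ∈ S, |p.1 - 1 / 2| ≤ R ∧ |p.2 - 1 / 2| ≤ R := by
    intro p hp
    simpa only [hSdef, Metric.mem_closedBall, Prod.dist_eq, max_le_iff, Real.dist_eq] using hp
  have hδ : 0 < 1 / 2 - R := by linarith
  have hδS : ∀ p ∈ S, 1 / 2 - R ≤ p.1 ∧ 1 / 2 - R ≤ p.2 := fun p hp =>
    ⟨by linarith [(abs_le.1 (hSc p hp).1).1], by linarith [(abs_le.1 (hSc p hp).2).1]⟩
  have hχ : IsTestOn S χ := ⟨χ.contDiff, χ.hasCompactSupport, χ.tsupport_eq.le⟩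
  have hOb : O ⊆ Metric.closedBall ((1 / 2, 1 / 2) : ℝ × ℝ) r0 :=
    (subset_closure.trans hsub).trans (Metric.ball_subset_closedBall.trans
      (Metric.closedBall_subset_closedBall (le_max_left _ _)))
  have hOS : O ⊆ S := hOb.trans (Metric.closedBall_subset_closedBall hR1.le)
  have hOO : O ⊆ Omega := hOS.trans hSO
  have hχ1 : ∀ p ∈ O, χ p = 1 := fun p hp => χ.one_of_mem_closedBall (hOb hp)
  obtain ⟨a, asm, ⟨ca, ca0, hca⟩, abd, ⟨La, hLa⟩, ha⟩ := coef h₁ hRp hR2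
  obtain ⟨b, bsm, ⟨cb, cb0, hcb⟩, bbd, ⟨Lb, hLb⟩, hb⟩ := coef h₂ hRp hR2
  obtain ⟨φ, hφ, c0, cx, cy⟩ := approx h₁ h₂ hu.1 hS hSO hδ hδS
  have ind : ∀ {g : ℝ × ℝ → ℝ}, MemLp g 2 (volume.restrict S) → MemLp (S.indicator g) 2 volume :=
    fun h => (memLp_indicator_iff_restrict hS).2 h
  have rs : ∀ {g : ℝ × ℝ → ℝ}, MemLp g 2 (volume.restrict Omega) → MemLp g 2 (volume.restrict S) :=
    fun h => h.mono_measure (Measure.restrict_mono hSO le_rfl)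
  have mgx : MemLp gx 2 (volume.restrict S) := wt_mem (ω := fun p => p.2 ^ α₁) hS hSO
    (Real.rpow_pos_of_pos hδ α₁) (fun p hp => Real.rpow_le_rpow hδ.le (hδS p hp).2 h₁.le)
    hm.weakX.2.1.aestronglyMeasurable hm.wgx
  have mgy : MemLp gy 2 (volume.restrict S) := wt_mem (ω := fun p => p.1 ^ α₂) hS hSO
    (Real.rpow_pos_of_pos hδ α₂) (fun p hp => Real.rpow_le_rpow hδ.le (hδS p hp).1 h₂.le)
    hm.weakY.2.1.aestronglyMeasurable hm.wgy
  have Asm : ContDiff ℝ (⊤ : ℕ∞) (fun p : ℝ × ℝ => a p.2) := asm.comp contDiff_snd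
  have Bsm : ContDiff ℝ (⊤ : ℕ∞) (fun p : ℝ × ℝ => b p.1) := bsm.comp contDiff_fst
  have l : Loc S (min ca cb) (max 0 (max La Lb)) (fun p => a p.2) (fun p => b p.1)
      (S.indicator u) (S.indicator gx) (S.indicator gy) (S.indicator f) (S.indicator V) φ :=
    { hS := hS
      hSO := hSO
      cpos := lt_min ca0 cb0
      Asm := Asm
      Bsm := Bsm
      Alow := fun p => (min_le_left _ _).trans (hca _)
      Blow := fun p => (min_le_right _ _).trans (hcb _)
      Abd := ⟨1, fun p => abd _⟩
      Bbd := ⟨1, fun p => bbd _⟩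
      Ax := fun p => DD_fst_zero asm p
      By := fun p => DD_snd_zero bsm p
      hAL := fun p q => (hLa _ _).trans (mul_le_mul ((le_max_left _ _).trans (le_max_right _ _))
        (norm_snd_le (p - q)) (abs_nonneg _) (le_max_left _ _))
      hBL := fun p q => (hLb _ _).trans (mul_le_mul ((le_max_right _ _).trans (le_max_right _ _))
        (norm_fst_le (p - q)) (abs_nonneg _) (le_max_left _ _))
      hu := ind (rs hm.memL2)
      hgx := ind mgx
      hgy := ind mgy
      hf := ind (rs hf)
      hV := ind (rs hV2)
      Vpos := by
        rw [ae_restrict_iff' measurableSet_Omega] at hVpos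
        filter_upwards [hVpos] with p hp
        exact indicator_apply_nonneg fun h => hp (hSO h)
      wkx := fun ψ hψ => wk_loc hSO (hm.weakX.2.2 ψ (hψ.mono hSO)) hψ
      wky := fun ψ hψ => wk_loc hSO (hm.weakY.2.2 ψ (hψ.mono hSO)) hψ
      eq := by
        intro ψ hψ
        have hψO := hψ.mono hSO
        have E := hsol ψ _ _ (test_mem h₁ h₂ hV2 hψO)
        rw [aForm, setIntegral_eq_integral_of_forall_compl_eq_zero
          (fun p hp => by rw [hψO.zero_off hp, (hψO.DD _).zero_off hp, (hψO.DD _).zero_off hp]; ring),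
          setIntegral_eq_integral_of_forall_compl_eq_zero
          (fun p hp => by rw [hψO.zero_off hp, mul_zero])] at E
        have i1 : Integrable (fun p => a p.2 * S.indicator gx p * DD (1, 0) ψ p +
            b p.1 * S.indicator gy p * DD (0, 1) ψ p) volume :=
          (L2_mul (memLp_bdd_mul Asm.continuous ⟨1, fun p => abd _⟩ (ind mgx))
            ((hψ.DD _).memLp 2)).add
          (L2_mul (memLp_bdd_mul Bsm.continuous ⟨1, fun p => bbd _⟩ (ind mgy))
            ((hψ.DD _).memLp 2))
        have i2 : Integrable (fun p => S.indicator V p * (ψ p * S.indicator u p)) volume :=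
          L2_mul (ind (rs hV2)) (memLp_bdd_mul hψ.continuous hψ.bdd (ind (rs hm.memL2)))
        have i3 : Integrable (fun p => S.indicator f p * ψ p) volume :=
          L2_mul (ind (rs hf)) (hψ.memLp 2)
        have e1 : ∀ p, (p.2 ^ α₁ * gx p) * (p.2 ^ α₁ * DD (1, 0) ψ p) +
            (p.1 ^ α₂ * gy p) * (p.1 ^ α₂ * DD (0, 1) ψ p) + V p * u p * ψ p =
            (a p.2 * S.indicator gx p * DD (1, 0) ψ p +
            b p.1 * S.indicator gy p * DD (0, 1) ψ p) +
            S.indicator V p * (ψ p * S.indicator u p) := by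
          intro p
          by_cases hp : p ∈ S
          · simp only [indicator_of_mem hp]
            rw [ha _ (hSc p hp).2, hb _ (hSc p hp).1]; ring
          · rw [hψ.zero_off hp, (hψ.DD _).zero_off hp, (hψ.DD _).zero_off hp]; ring
        have e2 : ∀ p, f p * ψ p = S.indicator f p * ψ p := by
          intro p
          by_cases hp : p ∈ S
          · simp only [indicator_of_mem hp]
          · rw [hψ.zero_off hp]; ring
        simp only [e1, e2] at E
        rw [integral_add i1 i2] at E
        rw [eq_sub_of_add_eq E, ← integral_sub i3 i2]
        congr 1; funext p; ring
      hφ := hφ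
      c0 := c0
      cx := cx
      cy := cy }
  obtain ⟨⟨g11, g12, g21, g22, w11, w12, w21, w22, -, -, -, m⟩, γ, g0, g1, C, w, hw, hH⟩ :=
    l.regular hχ hO hOc hχ1
  have ii : ∀ g : ℝ × ℝ → ℝ, ∀ p ∈ O, S.indicator g p = g p := fun g p hp =>
    indicator_of_mem (hOS hp) g
  have lx := hm.weakX.2.1.mono_set hOO
  have ly := hm.weakY.2.1.mono_set hOO
  have sO : ∀ {g : ℝ × ℝ → ℝ}, MemLp g 2 (volume.restrict S) → MemLp g 2 (volume.restrict O) :=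
    fun h => h.mono_measure (Measure.restrict_mono hOS le_rfl)
  have hOm := hO.measurableSet
  refine ⟨⟨g11, g12, g21, g22, wkX_congr hOm lx (ii gx) w11, wkY_congr hOm lx (ii gx) w12,
    wkX_congr hOm ly (ii gy) w21, wkY_congr hOm ly (ii gy) w22, sO (rs hm.memL2), sO mgx, sO mgy, m⟩,
    γ, g0, g1, C, w, ?_, hH⟩
  rw [ae_restrict_iff' hOm] at hw ⊢
  filter_upwards [hw] with p hp hpO
  rw [hp hpO, ii u p hpO]

/-- Interior regularity: the weak solution of the Dirichlet problem
with `V ∈ L^p(Ω)`, `2 ≤ p < ∞`, `f ∈ L²(Ω)`, belongs to `H²(Ω')` for every open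
`Ω'` with `closure Ω' ⊆ Ω`, and is Hölder continuous (for some exponent `α ∈ (0,1)`)
on `closure Ω'`. -/
theorem interior_regularity (α₁ α₂ ppow : ℝ)
    (hα₁ : α₁ ∈ Ioo (0:ℝ) (1/2)) (hα₂ : α₂ ∈ Ioo (0:ℝ) (1/2))
    (hp : 2 ≤ ppow) (V : ℝ × ℝ → ℝ)
    (hV : MemLp V (ENNReal.ofReal ppow) (volume.restrict Omega))
    (hVpos : ∀ᵐ p ∂(volume.restrict Omega), 0 ≤ V p)
    (f : ℝ × ℝ → ℝ) (hf : MemLp f 2 (volume.restrict Omega))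
    (u gx gy : ℝ × ℝ → ℝ) (hu : MemH0 α₁ α₂ V u gx gy)
    (hsol : ∀ v hx hy : ℝ × ℝ → ℝ, MemH0 α₁ α₂ V v hx hy →
      aForm α₁ α₂ V u gx gy v hx hy = ∫ p in Omega, f p * v p) :
    ∀ Ω' : Set (ℝ × ℝ), IsOpen Ω' → closure Ω' ⊆ Omega →
      ((∃ g₁₁ g₁₂ g₂₁ g₂₂ : ℝ × ℝ → ℝ,
        HasWeakDerivXOn Ω' gx g₁₁ ∧ HasWeakDerivYOn Ω' gx g₁₂ ∧
        HasWeakDerivXOn Ω' gy g₂₁ ∧ HasWeakDerivYOn Ω' gy g₂₂ ∧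
        MemLp u 2 (volume.restrict Ω') ∧
        MemLp gx 2 (volume.restrict Ω') ∧ MemLp gy 2 (volume.restrict Ω') ∧
        MemLp g₁₁ 2 (volume.restrict Ω') ∧ MemLp g₁₂ 2 (volume.restrict Ω') ∧
        MemLp g₂₁ 2 (volume.restrict Ω') ∧ MemLp g₂₂ 2 (volume.restrict Ω')) ∧
      (∃ γ : NNReal, 0 < γ ∧ (γ : ℝ) < 1 ∧ ∃ (C : NNReal) (w : ℝ × ℝ → ℝ),
        (∀ᵐ p ∂(volume.restrict Ω'), w p = u p) ∧
        HolderOnWith C γ w (closure Ω'))) := by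
  intro O hO hOc
  exact interior_aux α₁ α₂ ppow hα₁ hα₂ hp V hV hVpos f hf u gx gy hu hsol O hO hOc
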